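/- In dimension 12, every finite set S of points on the unit sphere of EuclideanSpace ℝ (Fin 12) (i.e., ‖x‖ = 1 for all x ∈ S) such that any two distinct points of S are at Euclidean distance at least 1 has cardinality at most 1357; that is, the kissing number in dimension 12 is at most 1357. -/

import Mathlib

/-!
The argument is the semidefinite programming bound of Bachoc and Vallentin. If `A` is positive
semidefinite on the sphere and `T` is positive semidefinite for every pole, then summing `A` over
the pairs and `T` over the triples of a kissing configuration gives a nonnegative number. Upper
bounds for `A u + T u u 1` and for the cyclic sum of `T` at inner products in `[-1, 1/2]` turn this
into a polynomial inequality in the number of points, which fails at `1358`.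

`A` is a nonnegative combination of Gegenbauer polynomials of dimension 12. By the addition theorem
at a pole, `T` is built from Gegenbauer polynomials of dimension 11, each multiplied by a sum of
products `f u * f v`.

The two pointwise bounds are polynomial inequalities on a box, settled by exact integer arithmetic.
With `x = 2 (1 + u) / 3 = a / (1 + a)`, the Bernstein coefficients in `x` are, up to binomials, the
monomial coefficients of the numerator in `a`. These are read off from the value of the numerator
at one large integer point (Kronecker substitution), and the subdivision of the box by
de Casteljau's algorithm acts on whole coefficient tensors packed into single natural numbers.
-/

namespace KissingNumber

/-! ### The Fischer form and harmonic polynomials -/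

section Fischer

open MvPolynomial

variable {ι : Type*} [Fintype ι]

/-- The multi-index factorial `α!`, the squared Fischer norm of the monomial `X ^ α`. -/
def multiFactorial (α : ι →₀ ℕ) : ℝ := ∏ i, ((α i).factorial : ℝ)

lemma multiFactorial_nonneg (α : ι →₀ ℕ) : 0 ≤ multiFactorial α := by
  unfold multiFactorial; positivity

lemma multiFactorial_add_single (α : ι →₀ ℕ) (i : ι) :
    multiFactorial (α + Finsupp.single i 1) = (α i + 1) * multiFactorial α := by
  classical
  have off_diagonal :
      ∏ j ∈ Finset.univ.erase i, (((α + Finsupp.single i 1 : ι →₀ ℕ) j).factorial : ℝ) =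
        ∏ j ∈ Finset.univ.erase i, ((α j).factorial : ℝ) := by
    refine Finset.prod_congr rfl fun j hj => ?_
    simp [(Finset.ne_of_mem_erase hj).symm]
  unfold multiFactorial
  rw [← Finset.mul_prod_erase _ _ (Finset.mem_univ i), off_diagonal,
    ← Finset.mul_prod_erase _ _ (Finset.mem_univ i), ← mul_assoc]
  simp [Nat.factorial_succ]

/-- The Fischer inner product on polynomials: distinct monomials are orthogonal and `X ^ α` has
squared norm `α!`. Multiplication by `X i` is adjoint to `∂ / ∂ X i`. -/
noncomputable def fischerForm : MvPolynomial ι ℝ →ₗ[ℝ] MvPolynomial ι ℝ →ₗ[ℝ] ℝ :=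
  (basisMonomials ι ℝ).constr ℝ fun α => multiFactorial α • lcoeff ℝ α

lemma fischerForm_monomial (α : ι →₀ ℕ) (r : ℝ) (q : MvPolynomial ι ℝ) :
    fischerForm (monomial α r) q = r * (multiFactorial α * coeff α q) := by
  have monomial_eq : monomial α r = r • basisMonomials ι ℝ α := by simp [smul_monomial]
  rw [monomial_eq, map_smul, fischerForm, Module.Basis.constr_basis]
  simp [lcoeff]

lemma fischerForm_self_nonneg (p : MvPolynomial ι ℝ) : 0 ≤ fischerForm p p := by
  have expand (q : MvPolynomial ι ℝ) : fischerForm p q =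
      ∑ α ∈ p.support, coeff α p * (multiFactorial α * coeff α q) := by
    conv_lhs => rw [p.as_sum]
    simp only [map_sum, LinearMap.sum_apply, fischerForm_monomial]
  rw [expand]
  refine Finset.sum_nonneg fun α _ => ?_
  rw [mul_left_comm]
  exact mul_nonneg (multiFactorial_nonneg α) (mul_self_nonneg _)

lemma fischerForm_comm (p q : MvPolynomial ι ℝ) : fischerForm p q = fischerForm q p := by
  classical
  induction p using MvPolynomial.induction_on' with
  | monomial α r =>
    induction q using MvPolynomial.induction_on' with
    | monomial β s =>
      rw [fischerForm_monomial, fischerForm_monomial, coeff_monomial, coeff_monomial]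
      rcases eq_or_ne α β with rfl | h
      · simp only [if_true]; ring
      · simp [h, h.symm]
    | add p q hp hq => simp only [map_add, LinearMap.add_apply, hp, hq]
  | add p q hp hq => simp only [map_add, LinearMap.add_apply, hp, hq]

lemma fischerForm_X_mul (i : ι) (p q : MvPolynomial ι ℝ) :
    fischerForm (X i * p) q = fischerForm p (pderiv i q) := by
  induction p using MvPolynomial.induction_on' with
  | monomial α r =>
    have shift : (X i * monomial α r : MvPolynomial ι ℝ) =
        monomial (α + Finsupp.single i 1) r := by
      rw [X, monomial_mul, add_comm, one_mul]
    rw [shift, fischerForm_monomial, fischerForm_monomial, multiFactorial_add_single,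
      coeff_pderiv]
    ring
  | add p q hp hq => simp only [mul_add, map_add, LinearMap.add_apply, hp, hq]

/-- The linear form `x ↦ a ⬝ᵥ x`, as a polynomial. -/
noncomputable def linearForm (a : ι → ℝ) : MvPolynomial ι ℝ := ∑ i, C (a i) * X i

variable (ι) in
/-- The squared Euclidean norm `∑ Xᵢ²`, as a polynomial. -/
noncomputable def normSq : MvPolynomial ι ℝ := ∑ i, X i * X i

/-- The Laplace operator on polynomials. -/
noncomputable def laplacian : MvPolynomial ι ℝ →ₗ[ℝ] MvPolynomial ι ℝ :=
  ∑ i, (pderiv i).toLinearMap ∘ₗ (pderiv i).toLinearMap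

lemma laplacian_apply (q : MvPolynomial ι ℝ) :
    laplacian q = ∑ i, pderiv i (pderiv i q) := by
  simp [laplacian]

lemma fischerForm_linearForm_mul (a : ι → ℝ) (p q : MvPolynomial ι ℝ) :
    fischerForm (linearForm a * p) q = fischerForm p (∑ i, C (a i) * pderiv i q) := by
  simp only [linearForm, Finset.sum_mul, map_sum, LinearMap.sum_apply, smul_mul_assoc,
    ← smul_eq_C_mul, map_smul, LinearMap.smul_apply, fischerForm_X_mul]

lemma fischerForm_normSq_mul (p q : MvPolynomial ι ℝ) :
    fischerForm (normSq ι * p) q = fischerForm p (laplacian q) := by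
  simp only [normSq, laplacian_apply, Finset.sum_mul, map_sum, LinearMap.sum_apply, mul_assoc,
    fischerForm_X_mul]

lemma pderiv_linearForm (i : ι) (a : ι → ℝ) : pderiv i (linearForm a) = C (a i) := by
  classical
  simp [linearForm, pderiv_X, Pi.single_apply]

lemma pderiv_normSq (i : ι) : pderiv i (normSq ι) = 2 * X i := by
  classical
  simp [normSq, pderiv_X, Pi.single_apply, Finset.sum_add_distrib, two_mul]

lemma isHomogeneous_linearForm (a : ι → ℝ) : (linearForm a).IsHomogeneous 1 :=
  IsHomogeneous.sum _ _ _ fun i _ => by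
    simpa using (isHomogeneous_C ι (a i)).mul (isHomogeneous_X ℝ i)

variable (ι) in
lemma isHomogeneous_normSq : (normSq ι).IsHomogeneous 2 :=
  IsHomogeneous.sum _ _ _ fun i _ => (isHomogeneous_X ℝ i).mul (isHomogeneous_X ℝ i)

lemma sum_C_mul_pderiv_linearForm_pow (a b : ι → ℝ) (n : ℕ) :
    ∑ i, C (b i) * pderiv i (linearForm a ^ (n + 1)) =
      C ((n + 1) * (b ⬝ᵥ a)) * linearForm a ^ n := by
  simp only [pderiv_pow, pderiv_linearForm, Nat.add_sub_cancel, dotProduct, Finset.mul_sum,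
    map_sum, Finset.sum_mul]
  refine Finset.sum_congr rfl fun i _ => ?_
  simp only [map_mul, map_add, map_natCast, map_one, Nat.cast_add, Nat.cast_one]
  ring

lemma laplacian_linearForm_pow_add_two (a : ι → ℝ) (n : ℕ) :
    laplacian (linearForm a ^ (n + 2)) =
      C ((n + 2) * (n + 1) * (a ⬝ᵥ a)) * linearForm a ^ n := by
  have first (i : ι) : pderiv i (linearForm a ^ (n + 2)) =
      C ((n + 2) * a i) * linearForm a ^ (n + 1) := by
    rw [pderiv_pow, pderiv_linearForm, show n + 2 - 1 = n + 1 from rfl]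
    simp only [map_mul, map_add, map_natCast, map_ofNat, Nat.cast_add, Nat.cast_ofNat]
    ring
  simp only [laplacian_apply, first, pderiv_C_mul, pderiv_pow, pderiv_linearForm,
    Nat.add_sub_cancel, dotProduct, Finset.mul_sum, map_sum, Finset.sum_mul]
  refine Finset.sum_congr rfl fun i _ => ?_
  simp only [map_mul, map_add, map_natCast, map_ofNat, map_one, Nat.cast_add, Nat.cast_one]
  ring

lemma laplacian_linearForm_pow (a : ι → ℝ) (m : ℕ) :
    laplacian (linearForm a ^ m) =
      C ((m : ℝ) * (m - 1) * (a ⬝ᵥ a)) * linearForm a ^ (m - 2) := by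
  match m with
  | 0 => simp [laplacian_apply]
  | 1 => simp [laplacian_apply, pderiv_linearForm]
  | n + 2 =>
    rw [laplacian_linearForm_pow_add_two, Nat.add_sub_cancel]
    congr 2
    push_cast
    ring

lemma fischerForm_normSq_pow_mul_linearForm_pow (a b : ι → ℝ) (m j : ℕ) :
    fischerForm (normSq ι ^ j * linearForm b ^ m) (linearForm a ^ (2 * j + m)) =
      ((2 * j + m).factorial : ℝ) * (a ⬝ᵥ a) ^ j * (b ⬝ᵥ a) ^ m := by
  induction j with
  | zero =>
    induction m with
    | zero => simpa [multiFactorial] using fischerForm_monomial (ι := ι) 0 1 1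
    | succ m ih =>
      simp only [pow_zero, one_mul, mul_zero, zero_add, mul_one] at ih ⊢
      rw [pow_succ', fischerForm_linearForm_mul, sum_C_mul_pderiv_linearForm_pow,
        ← smul_eq_C_mul, map_smul, ih, Nat.factorial_succ, smul_eq_mul]
      push_cast
      ring
  | succ j ih =>
    rw [pow_succ', mul_assoc, fischerForm_normSq_mul,
      show 2 * (j + 1) + m = (2 * j + m) + 2 by ring, laplacian_linearForm_pow_add_two,
      ← smul_eq_C_mul, map_smul, ih, Nat.factorial_succ, Nat.factorial_succ, smul_eq_mul]
    push_cast
    ring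

lemma laplacian_normSq_mul {q : MvPolynomial ι ℝ} {m : ℕ} (hq : q.IsHomogeneous m) :
    laplacian (normSq ι * q) =
      C (2 * Fintype.card ι + 4 * m : ℝ) * q + normSq ι * laplacian q := by
  have second (i : ι) : pderiv i (pderiv i (normSq ι * q)) =
      2 * q + 4 * (X i * pderiv i q) + normSq ι * pderiv i (pderiv i q) := by
    have pderiv_two : pderiv i (2 : MvPolynomial ι ℝ) = 0 := by
      simpa using (pderiv i).map_natCast 2
    simp only [pderiv_mul, pderiv_normSq, map_add, pderiv_X_self, pderiv_two]
    ring
  simp only [laplacian_apply, second, Finset.sum_add_distrib, ← Finset.mul_sum,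
    hq.sum_X_mul_pderiv, Finset.sum_const, Finset.card_univ, nsmul_eq_mul]
  simp only [map_add, map_mul, map_natCast, map_ofNat]
  ring

lemma laplacian_normSq_pow_mul_linearForm_pow (a : ι → ℝ) (j m : ℕ) :
    laplacian (normSq ι ^ j * linearForm a ^ m) =
      C (2 * (j : ℝ) * (Fintype.card ι + 2 * j - 2 + 2 * m)) *
          (normSq ι ^ (j - 1) * linearForm a ^ m) +
        C ((m : ℝ) * (m - 1) * (a ⬝ᵥ a)) * (normSq ι ^ j * linearForm a ^ (m - 2)) := by
  induction j with
  | zero => simp [laplacian_linearForm_pow]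
  | succ j ih =>
    have homogeneous := ((isHomogeneous_normSq ι).pow j).mul ((isHomogeneous_linearForm a).pow m)
    rw [pow_succ', mul_assoc, laplacian_normSq_mul homogeneous, ih]
    rcases j with _ | j <;>
    · simp only [zero_add, Nat.sub_self, Nat.add_sub_cancel, pow_zero, map_add, map_mul,
        map_natCast, map_ofNat, map_sub, map_one, map_zero, Nat.cast_zero, Nat.cast_add,
        Nat.cast_mul, Nat.cast_one, Nat.cast_ofNat]
      ring

end Fischer

/-! ### Zonal kernels -/

section Zonal

open MvPolynomial

/-- The homogenised polynomial `∑ⱼ cⱼ wʲ s ^ (k - 2 * j)`. With `s = ⟪x, y⟫` and `w = ‖x‖² ‖y‖²` and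
Gegenbauer coefficients `c` it is, up to scale, the reproducing kernel of harmonic polynomials of
degree `k`. -/
def zonalKernel {R : Type*} [CommSemiring R] (k : ℕ) (c : ℕ → R) (s w : R) : R :=
  ∑ j ∈ Finset.range (k / 2 + 1), c j * w ^ j * s ^ (k - 2 * j)

/-- `c` is a positive multiple of the coefficient sequence of the Gegenbauer polynomial of degree
`k` in dimension `n`; the recurrence says that the associated zonal polynomials are harmonic. -/
structure IsGegenbauerCoeff (n k : ℕ) (c : ℕ → ℝ) : Prop where
  pos : 0 < c 0
  recurrence : ∀ j, 2 * j + 2 ≤ k →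
    c (j + 1) * (2 * (j + 1) * (n + 2 * k - 2 * j - 4)) +
      c j * ((k - 2 * j) * (k - 2 * j - 1)) = 0

variable {ι : Type*} [Fintype ι]

/-- The polynomial `x ↦ zonalKernel k c (b ⬝ᵥ x) (‖b‖² ‖x‖²)`. -/
noncomputable def zonalPoly (k : ℕ) (c : ℕ → ℝ) (b : ι → ℝ) : MvPolynomial ι ℝ :=
  ∑ j ∈ Finset.range (k / 2 + 1),
    C (c j * (b ⬝ᵥ b) ^ j) * (normSq ι ^ j * linearForm b ^ (k - 2 * j))

lemma sum_range_succ_add_eq_last {M : Type*} [AddCommGroup M] (f g : ℕ → M) (N : ℕ)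
    (h0 : f 0 = 0) (h : ∀ j < N, f (j + 1) + g j = 0) :
    ∑ j ∈ Finset.range (N + 1), (f j + g j) = g N := by
  rw [Finset.sum_add_distrib, Finset.sum_range_succ' f, Finset.sum_range_succ g, h0, add_zero,
    ← add_assoc, ← Finset.sum_add_distrib,
    Finset.sum_eq_zero fun j hj => h j (Finset.mem_range.1 hj), zero_add]

lemma laplacian_zonalPoly {k : ℕ} {c : ℕ → ℝ}
    (hc : IsGegenbauerCoeff (Fintype.card ι) k c) (b : ι → ℝ) :
    laplacian (zonalPoly k c b) = 0 := by
  have term (j : ℕ) :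
      laplacian (C (c j * (b ⬝ᵥ b) ^ j) * (normSq ι ^ j * linearForm b ^ (k - 2 * j))) =
        C (c j * (b ⬝ᵥ b) ^ j *
            (2 * (j : ℝ) * (Fintype.card ι + 2 * j - 2 + 2 * (k - 2 * j : ℕ)))) *
          (normSq ι ^ (j - 1) * linearForm b ^ (k - 2 * j)) +
        C (c j * (b ⬝ᵥ b) ^ (j + 1) * (((k - 2 * j : ℕ) : ℝ) * ((k - 2 * j : ℕ) - 1))) *
          (normSq ι ^ j * linearForm b ^ (k - 2 * j - 2)) := by
    rw [← smul_eq_C_mul, map_smul, laplacian_normSq_pow_mul_linearForm_pow, smul_eq_C_mul]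
    simp only [map_mul, map_pow, pow_succ]
    ring
  rw [zonalPoly, map_sum, Finset.sum_congr rfl fun j _ => term j, sum_range_succ_add_eq_last]
  · obtain h | h : k - 2 * (k / 2) = 0 ∨ k - 2 * (k / 2) = 1 := by omega
    all_goals simp [h]
  · simp
  · intro j hj
    have hjk : 2 * j + 2 ≤ k := by omega
    have cast_sub : ((k - 2 * j : ℕ) : ℝ) = k - 2 * j := by
      rw [Nat.cast_sub (by omega)]; push_cast; ring
    have cast_sub_two : ((k - 2 * j - 2 : ℕ) : ℝ) = k - 2 * j - 2 := by
      rw [Nat.cast_sub (by omega), cast_sub]; push_cast; ring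
    rw [show k - 2 * (j + 1) = k - 2 * j - 2 by omega, Nat.add_sub_cancel, ← add_mul, ← C_add,
      cast_sub, cast_sub_two]
    refine mul_eq_zero_of_left (C_eq_zero.2 ?_) _
    push_cast
    linear_combination (b ⬝ᵥ b) ^ (j + 1) * hc.recurrence j hjk

lemma fischerForm_zonalPoly_linearForm_pow (k : ℕ) (c : ℕ → ℝ) (a b : ι → ℝ) :
    fischerForm (zonalPoly k c b) (linearForm a ^ k) =
      k.factorial * zonalKernel k c (b ⬝ᵥ a) ((a ⬝ᵥ a) * (b ⬝ᵥ b)) := by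
  rw [zonalPoly, zonalKernel, map_sum, LinearMap.sum_apply, Finset.mul_sum]
  refine Finset.sum_congr rfl fun j hj => ?_
  have hjk : 2 * j + (k - 2 * j) = k := by have := Finset.mem_range.1 hj; omega
  have pairing := fischerForm_normSq_pow_mul_linearForm_pow a b (k - 2 * j) j
  rw [hjk] at pairing
  rw [← smul_eq_C_mul, map_smul, LinearMap.smul_apply, pairing, smul_eq_mul, mul_pow]
  ring

/-- Every term of `zonalPoly k c a` except the leading one is divisible by `normSq`, hence
Fischer-orthogonal to the harmonic polynomial `zonalPoly k c b`. -/
lemma fischerForm_zonalPoly {k : ℕ} {c : ℕ → ℝ}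
    (hc : IsGegenbauerCoeff (Fintype.card ι) k c) (a b : ι → ℝ) :
    fischerForm (zonalPoly k c a) (zonalPoly k c b) =
      c 0 * (k.factorial * zonalKernel k c (b ⬝ᵥ a) ((a ⬝ᵥ a) * (b ⬝ᵥ b))) := by
  have split_leading : zonalPoly k c a = c 0 • linearForm a ^ k +
      normSq ι * ∑ j ∈ Finset.range (k / 2),
        C (c (j + 1) * (a ⬝ᵥ a) ^ (j + 1)) *
          (normSq ι ^ j * linearForm a ^ (k - 2 * (j + 1))) := by
    rw [zonalPoly, Finset.sum_range_succ', Finset.mul_sum, add_comm]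
    congr 1
    · simp [smul_eq_C_mul]
    · refine Finset.sum_congr rfl fun j _ => ?_
      rw [pow_succ (normSq ι)]; ring
  rw [split_leading, map_add, LinearMap.add_apply, fischerForm_normSq_mul,
    laplacian_zonalPoly hc, map_zero, add_zero, map_smul, LinearMap.smul_apply,
    fischerForm_comm, fischerForm_zonalPoly_linearForm_pow, smul_eq_mul]

lemma sum_zonalKernel_dotProduct_nonneg {α : Type*} {k : ℕ} {c : ℕ → ℝ}
    (hc : IsGegenbauerCoeff (Fintype.card ι) k c)
    (S : Finset α) (v : α → ι → ℝ) (w : α → ℝ) :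
    0 ≤ ∑ x ∈ S, ∑ y ∈ S, w x * w y *
      zonalKernel k c (v x ⬝ᵥ v y) ((v x ⬝ᵥ v x) * (v y ⬝ᵥ v y)) := by
  have hpos : 0 < c 0 * k.factorial := mul_pos hc.pos (by positivity)
  refine (mul_nonneg_iff_of_pos_left hpos).1 ?_
  have square := fischerForm_self_nonneg (∑ x ∈ S, w x • zonalPoly k c (v x))
  simp only [map_sum, LinearMap.sum_apply, map_smul, LinearMap.smul_apply, smul_eq_mul,
    fischerForm_zonalPoly hc] at square
  refine square.trans_eq ?_
  simp only [Finset.mul_sum]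
  refine Finset.sum_congr rfl fun x _ => Finset.sum_congr rfl fun y _ => ?_
  rw [mul_comm (v y ⬝ᵥ v y)]
  ring

lemma sum_zonalKernel_inner_nonneg {E : Type*} [NormedAddCommGroup E] [InnerProductSpace ℝ E]
    [FiniteDimensional ℝ E] {α : Type*} {k : ℕ} {c : ℕ → ℝ}
    (hc : IsGegenbauerCoeff (Module.finrank ℝ E) k c)
    (S : Finset α) (v : α → E) (w : α → ℝ) :
    0 ≤ ∑ x ∈ S, ∑ y ∈ S, w x * w y *
      zonalKernel k c (inner ℝ (v x) (v y)) (‖v x‖ ^ 2 * ‖v y‖ ^ 2) := by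
  let basis := stdOrthonormalBasis ℝ E
  have inner_eq (x y : E) : (basis.repr x).ofLp ⬝ᵥ (basis.repr y).ofLp = inner ℝ x y := by
    simp only [dotProduct, basis.repr_apply_apply, ← basis.sum_inner_mul_inner x y,
      real_inner_comm x]
  simpa only [inner_eq, real_inner_self_eq_norm_sq] using
    sum_zonalKernel_dotProduct_nonneg (by rwa [Fintype.card_fin]) S
      (fun x => (basis.repr (v x)).ofLp) w

end Zonal

/-! ### The three-point bound -/

section DistinctTriples

variable {α : Type*} [DecidableEq α]

lemma sum_distinct_rotate {M : Type*} [AddCommMonoid M] (S : Finset α) (f : α → α → α → M) :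
    ∑ x ∈ S, ∑ y ∈ S.erase x, ∑ z ∈ (S.erase x).erase y, f y z x =
      ∑ x ∈ S, ∑ y ∈ S.erase x, ∑ z ∈ (S.erase x).erase y, f x y z := by
  rw [Finset.sum_comm' (t' := S) (s' := fun y => S.erase y) (by simp; tauto)]
  refine Finset.sum_congr rfl fun y _ => ?_
  exact Finset.sum_comm' (by simp; tauto)

lemma sum_sum_erase_erase_const {S : Finset α} {x : α} (hx : x ∈ S) (c : ℝ) :
    ∑ y ∈ S.erase x, ∑ _z ∈ (S.erase x).erase y, c = (S.card - 1) * (S.card - 2) * c := by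
  have sum_last (y : α) (hy : y ∈ S.erase x) :
      ∑ _z ∈ (S.erase x).erase y, c = (S.card - 2) * c := by
    rw [Finset.sum_const, nsmul_eq_mul, Finset.cast_card_erase_of_mem hy,
      Finset.cast_card_erase_of_mem hx]
    ring
  rw [Finset.sum_congr rfl sum_last, Finset.sum_const, nsmul_eq_mul,
    Finset.cast_card_erase_of_mem hx]
  ring

end DistinctTriples

section ThreePoint

variable {E : Type*} [NormedAddCommGroup E] [InnerProductSpace ℝ E]

variable (E) in
/-- The functions `A` for which `(x, y) ↦ A ⟪x, y⟫` is of positive type on the unit sphere of `E`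
(tested with constant weights only). -/
def positiveOnSphere : AddSubmonoid (ℝ → ℝ) where
  carrier := {A | ∀ S : Finset E, (∀ x ∈ S, ‖x‖ = 1) → 0 ≤ ∑ x ∈ S, ∑ y ∈ S, A (inner ℝ x y)}
  zero_mem' S _ := by simp
  add_mem' hA hB S hS := by
    simpa only [Pi.add_apply, Finset.sum_add_distrib] using add_nonneg (hA S hS) (hB S hS)

variable (E) in
/-- The functions `T` for which, given any pole `x` on the unit sphere of `E`, the kernel
`(y, z) ↦ T ⟪x, y⟫ ⟪x, z⟫ ⟪y, z⟫` is of positive type on the unit sphere (tested with constant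
weights only). -/
def positiveAtPole : AddSubmonoid (ℝ → ℝ → ℝ → ℝ) where
  carrier := {T | ∀ (S : Finset E) (x : E), ‖x‖ = 1 → (∀ y ∈ S, ‖y‖ = 1) →
    0 ≤ ∑ y ∈ S, ∑ z ∈ S, T (inner ℝ x y) (inner ℝ x z) (inner ℝ y z)}
  zero_mem' S x _ _ := by simp
  add_mem' hT hU S x hx hS := by
    simpa only [Pi.add_apply, Finset.sum_add_distrib] using
      add_nonneg (hT S x hx hS) (hU S x hx hS)

lemma zonalKernel_mem_positiveOnSphere [FiniteDimensional ℝ E] {k : ℕ} {c : ℕ → ℝ}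
    (hc : IsGegenbauerCoeff (Module.finrank ℝ E) k c) :
    (fun t => zonalKernel k c t 1) ∈ positiveOnSphere E := by
  intro S hS
  refine (sum_zonalKernel_inner_nonneg hc S id fun _ => 1).trans_eq ?_
  refine Finset.sum_congr rfl fun x hx => Finset.sum_congr rfl fun y hy => ?_
  simp [hS x hx, hS y hy]

lemma inner_sub_inner_smul {x : E} (hx : ‖x‖ = 1) (y z : E) :
    inner ℝ (y - inner ℝ x y • x) (z - inner ℝ x z • x) =
      inner ℝ y z - inner ℝ x y * inner ℝ x z := by
  simp only [inner_sub_left, inner_sub_right, real_inner_smul_left, real_inner_smul_right,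
    real_inner_self_eq_norm_sq, hx, real_inner_comm x y]
  ring

lemma zonalKernel_mem_positiveAtPole [FiniteDimensional ℝ E] {n k : ℕ} {c : ℕ → ℝ}
    (hn : Module.finrank ℝ E = n + 1) (hc : IsGegenbauerCoeff n k c) (g : ℝ → ℝ) :
    (fun u v t => g u * g v * zonalKernel k c (t - u * v) ((1 - u ^ 2) * (1 - v ^ 2))) ∈
      positiveAtPole E := by
  intro S x hx hS
  have finrank_perp : Module.finrank ℝ (ℝ ∙ x)ᗮ = n := by
    have : Fact (Module.finrank ℝ E = n + 1) := ⟨hn⟩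
    exact Submodule.finrank_orthogonal_span_singleton (by rintro rfl; simp at hx)
  let proj (y : E) : (ℝ ∙ x)ᗮ := ⟨y - inner ℝ x y • x, by
    rw [Submodule.mem_orthogonal_singleton_iff_inner_right, inner_sub_right, inner_smul_right,
      real_inner_self_eq_norm_sq, hx]
    ring⟩
  have inner_proj (y z : E) :
      inner ℝ (proj y) (proj z) = inner ℝ y z - inner ℝ x y * inner ℝ x z :=
    inner_sub_inner_smul hx y z
  have norm_proj {y : E} (hy : y ∈ S) : ‖proj y‖ ^ 2 = 1 - inner ℝ x y ^ 2 := by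
    rw [← real_inner_self_eq_norm_sq, inner_proj, real_inner_self_eq_norm_sq, hS y hy]
    ring
  refine (sum_zonalKernel_inner_nonneg (finrank_perp.symm ▸ hc) S proj
    fun y => g (inner ℝ x y)).trans_eq ?_
  refine Finset.sum_congr rfl fun y hy => Finset.sum_congr rfl fun z hz => ?_
  rw [inner_proj, norm_proj hy, norm_proj hz]

/-- The determinant of the Gram matrix of three unit vectors with inner products `u`, `v`, `t`. -/
def gramDet (u v t : ℝ) : ℝ := 1 + 2 * u * v * t - u ^ 2 - v ^ 2 - t ^ 2

lemma gramDet_inner_nonneg {x y z : E} (hx : ‖x‖ = 1) (hy : ‖y‖ = 1) (hz : ‖z‖ = 1) :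
    0 ≤ gramDet (inner ℝ x y) (inner ℝ x z) (inner ℝ y z) := by
  have cauchy_schwarz :=
    real_inner_mul_inner_self_le (y - inner ℝ x y • x) (z - inner ℝ x z • x)
  simp only [inner_sub_inner_smul hx, real_inner_self_eq_norm_sq, hy, hz] at cauchy_schwarz
  unfold gramDet
  linarith

/-- The sum of `T` over the three choices of a pole in a triple with inner products `u`, `v`,
`t`. -/
def cyclicSum (T : ℝ → ℝ → ℝ → ℝ) (u v t : ℝ) : ℝ := T u v t + T v t u + T t u v

lemma cyclicSum_le_of_sorted {T : ℝ → ℝ → ℝ → ℝ} (symm : ∀ u v t, T u v t = T v u t)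
    {lo hi c : ℝ}
    (sorted : ∀ u v t, lo ≤ u → u ≤ v → v ≤ t → t ≤ hi → 0 ≤ gramDet u v t →
      cyclicSum T u v t ≤ c)
    {u v t : ℝ} (hu : u ∈ Set.Icc lo hi) (hv : v ∈ Set.Icc lo hi) (ht : t ∈ Set.Icc lo hi)
    (hdet : 0 ≤ gramDet u v t) : cyclicSum T u v t ≤ c := by
  have rotate (u v t : ℝ) : cyclicSum T u v t = cyclicSum T v t u := by unfold cyclicSum; ring
  have swap (u v t : ℝ) : cyclicSum T u v t = cyclicSum T v u t := by
    unfold cyclicSum; rw [symm u, symm v t, symm t u]; ring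
  have det_rotate (u v t : ℝ) : gramDet u v t = gramDet v t u := by unfold gramDet; ring
  have det_swap (u v t : ℝ) : gramDet u v t = gramDet v u t := by unfold gramDet; ring
  wlog hut : u ≤ t generalizing u v t
  · rw [swap, ← rotate]
    rw [det_swap, ← det_rotate] at hdet
    exact this ht hv hu hdet (le_of_not_ge hut)
  rcases le_total u v with huv | hvu
  · rcases le_total v t with hvt | htv
    · exact sorted u v t hu.1 huv hvt ht.2 hdet
    · rw [swap, rotate]
      rw [det_swap, det_rotate] at hdet
      exact sorted u t v hu.1 hut htv hv.2 hdet
  · rw [swap]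
    rw [det_swap] at hdet
    exact sorted v u t hv.1 hvu hut ht.2 hdet

section Bounds

variable {A : ℝ → ℝ} {T : ℝ → ℝ → ℝ → ℝ} {s c₂ c₃ : ℝ} {S : Finset E}

lemma inner_mem_Icc_of_unit (unit : ∀ x ∈ S, ‖x‖ = 1)
    (separated : ∀ x ∈ S, ∀ y ∈ S, x ≠ y → inner ℝ x y ≤ s) {x y : E} (hx : x ∈ S)
    (hy : y ∈ S) (hxy : x ≠ y) : inner ℝ x y ∈ Set.Icc (-1) s := by
  refine ⟨(abs_le.1 ?_).1, separated x hx y hy hxy⟩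
  simpa [unit x hx, unit y hy] using abs_real_inner_le_norm x y

lemma sum_pairs_le [DecidableEq E] (unit : ∀ x ∈ S, ‖x‖ = 1)
    (separated : ∀ x ∈ S, ∀ y ∈ S, x ≠ y → inner ℝ x y ≤ s)
    (pair_le : ∀ u ∈ Set.Icc (-1) s, A u + T u u 1 ≤ c₂) :
    ∑ x ∈ S, (∑ y ∈ S, A (inner ℝ x y) + ∑ y ∈ S.erase x, T (inner ℝ x y) (inner ℝ x y) 1) ≤
      S.card * (A 1 + (S.card - 1) * c₂) := by
  rw [← nsmul_eq_mul, ← Finset.sum_const]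
  refine Finset.sum_le_sum fun x hx => ?_
  rw [← Finset.add_sum_erase S _ hx, real_inner_self_eq_norm_sq, unit x hx, one_pow, add_assoc,
    ← Finset.sum_add_distrib, ← Finset.cast_card_erase_of_mem hx, ← nsmul_eq_mul,
    ← Finset.sum_const]
  gcongr with y hy
  exact pair_le _ (inner_mem_Icc_of_unit unit separated hx (Finset.mem_of_mem_erase hy)
    (Finset.ne_of_mem_erase hy).symm)

lemma sum_triples_le [DecidableEq E] (unit : ∀ x ∈ S, ‖x‖ = 1)
    (separated : ∀ x ∈ S, ∀ y ∈ S, x ≠ y → inner ℝ x y ≤ s)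
    (triple_le : ∀ u ∈ Set.Icc (-1) s, ∀ v ∈ Set.Icc (-1) s, ∀ t ∈ Set.Icc (-1) s,
      0 ≤ gramDet u v t → cyclicSum T u v t ≤ 3 * c₃) :
    ∑ x ∈ S, ∑ y ∈ S.erase x, ∑ z ∈ (S.erase x).erase y,
        T (inner ℝ x y) (inner ℝ x z) (inner ℝ y z) ≤
      S.card * ((S.card - 1) * (S.card - 2) * c₃) := by
  let τ (x y z : E) : ℝ := T (inner ℝ x y) (inner ℝ x z) (inner ℝ y z)
  have symmetrize : 3 * ∑ x ∈ S, ∑ y ∈ S.erase x, ∑ z ∈ (S.erase x).erase y, τ x y z =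
      ∑ x ∈ S, ∑ y ∈ S.erase x, ∑ z ∈ (S.erase x).erase y, (τ x y z + τ z x y + τ y z x) := by
    simp only [Finset.sum_add_distrib]
    rw [sum_distinct_rotate S τ, ← sum_distinct_rotate S fun x y z => τ z x y]
    ring
  suffices 3 * ∑ x ∈ S, ∑ y ∈ S.erase x, ∑ z ∈ (S.erase x).erase y, τ x y z ≤
      S.card * ((S.card - 1) * (S.card - 2) * (3 * c₃)) by linarith
  rw [symmetrize, ← nsmul_eq_mul, ← Finset.sum_const]
  refine Finset.sum_le_sum fun x hx => ?_
  rw [← sum_sum_erase_erase_const hx]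
  refine Finset.sum_le_sum fun y hy => Finset.sum_le_sum fun z hz => ?_
  simp only [Finset.mem_erase] at hy hz
  have mem_Icc {x y : E} := inner_mem_Icc_of_unit unit separated (x := x) (y := y)
  have bound := triple_le _ (mem_Icc hx hy.2 hy.1.symm) _ (mem_Icc hx hz.2.2 hz.2.1.symm) _
    (mem_Icc hy.2 hz.2.2 hz.1.symm) (gramDet_inner_nonneg (unit x hx) (unit y hy.2) (unit z hz.2.2))
  simpa only [cyclicSum, τ, real_inner_comm x y, real_inner_comm x z, real_inner_comm y z]
    using bound

theorem three_point_bound (hA : A ∈ positiveOnSphere E) (hT : T ∈ positiveAtPole E)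
    (pair_le : ∀ u ∈ Set.Icc (-1) s, A u + T u u 1 ≤ c₂)
    (triple_le : ∀ u ∈ Set.Icc (-1) s, ∀ v ∈ Set.Icc (-1) s, ∀ t ∈ Set.Icc (-1) s,
      0 ≤ gramDet u v t → cyclicSum T u v t ≤ 3 * c₃)
    (unit : ∀ x ∈ S, ‖x‖ = 1) (separated : ∀ x ∈ S, ∀ y ∈ S, x ≠ y → inner ℝ x y ≤ s) :
    0 ≤ S.card * (A 1 + (S.card - 1) * c₂ + (S.card - 1) * (S.card - 2) * c₃) := by
  classical
  have poles_nonneg : 0 ≤ ∑ x ∈ S, ∑ y ∈ S.erase x, ∑ z ∈ S.erase x,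
      T (inner ℝ x y) (inner ℝ x z) (inner ℝ y z) := Finset.sum_nonneg fun x hx =>
    hT (S.erase x) x (unit x hx) fun y hy => unit y (Finset.mem_of_mem_erase hy)
  have split_diagonal (x : E) : ∑ y ∈ S.erase x, ∑ z ∈ S.erase x,
        T (inner ℝ x y) (inner ℝ x z) (inner ℝ y z) =
      ∑ y ∈ S.erase x, T (inner ℝ x y) (inner ℝ x y) 1 +
        ∑ y ∈ S.erase x, ∑ z ∈ (S.erase x).erase y,
          T (inner ℝ x y) (inner ℝ x z) (inner ℝ y z) := by
    rw [← Finset.sum_add_distrib]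
    refine Finset.sum_congr rfl fun y hy => ?_
    rw [← Finset.add_sum_erase _ _ hy, real_inner_self_eq_norm_sq,
      unit y (Finset.mem_of_mem_erase hy), one_pow]
  have pairs := sum_pairs_le unit separated pair_le
  have triples := sum_triples_le unit separated triple_le
  have sphere_nonneg := hA S unit
  simp only [split_diagonal, Finset.sum_add_distrib] at poles_nonneg pairs
  linarith

end Bounds

end ThreePoint

/-! ### Tensor-product Bernstein sums -/

section Bernstein

variable {n : ℕ}

/-- The sum `∑ⱼ aⱼ Bₙⱼ(t)` of the Bernstein polynomials of degree `n` with coefficients `a`. -/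
noncomputable def bernsteinSum (n : ℕ) (a : ℕ → ℝ) (t : ℝ) : ℝ :=
  ∑ j ∈ Finset.range (n + 1), a j * (bernsteinPolynomial ℝ n j).eval t

lemma eval_bernsteinPolynomial (n j : ℕ) (t : ℝ) :
    (bernsteinPolynomial ℝ n j).eval t = n.choose j * t ^ j * (1 - t) ^ (n - j) := by
  simp [bernsteinPolynomial]

lemma eval_bernsteinPolynomial_nonneg (n j : ℕ) {t : ℝ} (ht : t ∈ Set.Icc (0 : ℝ) 1) :
    0 ≤ (bernsteinPolynomial ℝ n j).eval t := by
  have := sub_nonneg.2 ht.2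
  have := ht.1
  rw [eval_bernsteinPolynomial]
  positivity

lemma bernsteinSum_le_bernsteinSum {a b : ℕ → ℝ} {t : ℝ} (ht : t ∈ Set.Icc (0 : ℝ) 1)
    (h : ∀ j ≤ n, a j ≤ b j) : bernsteinSum n a t ≤ bernsteinSum n b t :=
  Finset.sum_le_sum fun j hj => mul_le_mul_of_nonneg_right
    (h j (Nat.lt_succ_iff.1 (Finset.mem_range.1 hj))) (eval_bernsteinPolynomial_nonneg n j ht)

/-- The shift `(S a)ⱼ = aⱼ₊₁`. In terms of it, `bernsteinSum n a t = (((1 - t) + t S) ^ n a)₀`. -/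
def shift : Module.End ℝ (ℕ → ℝ) := LinearMap.funLeft ℝ ℝ Nat.succ

/-- The average `(1 + S) / 2` of neighbouring entries: one row of de Casteljau's algorithm. -/
noncomputable def average : Module.End ℝ (ℕ → ℝ) := (1 / 2 : ℝ) • (1 + shift)

lemma shift_pow_apply (r : ℕ) (a : ℕ → ℝ) (j : ℕ) : (shift ^ r) a j = a (j + r) := by
  induction r generalizing j with
  | zero => rfl
  | succ r ih =>
    rw [pow_succ', Module.End.mul_apply]
    exact (ih (j + 1)).trans (congrArg a (by ring))

lemma bernsteinSum_pow_apply {P Q : Module.End ℝ (ℕ → ℝ)} (hPQ : Commute P Q) (a : ℕ → ℝ) (t : ℝ) :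
    bernsteinSum n (fun j => (Q ^ j * P ^ (n - j)) a 0) t = ((t • Q + (1 - t) • P) ^ n) a 0 := by
  have hcomm : Commute (t • Q) ((1 - t) • P) := (hPQ.symm.smul_left t).smul_right (1 - t)
  rw [hcomm.add_pow, LinearMap.sum_apply, Finset.sum_apply]
  refine Finset.sum_congr rfl fun j _ => ?_
  rw [eval_bernsteinPolynomial, smul_pow, smul_pow, smul_mul_smul_comm, Module.End.mul_apply,
    Module.End.natCast_apply, map_nsmul]
  simp only [LinearMap.smul_apply, Pi.smul_apply, smul_eq_mul, nsmul_eq_mul]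
  ring

lemma bernsteinSum_eq_shift_pow (a : ℕ → ℝ) (t : ℝ) :
    bernsteinSum n a t = ((t • shift + (1 - t) • 1) ^ n) a 0 := by
  rw [← bernsteinSum_pow_apply (Commute.one_left _)]
  simp only [one_pow, mul_one, shift_pow_apply, zero_add]

section Halving

variable {rows : ℕ → ℕ → ℝ}

lemma rows_le_average_pow
    (rows_succ_le : ∀ r j, rows (r + 1) j ≤ (rows r j + rows r (j + 1)) / 2)
    (r j : ℕ) : rows r j ≤ (average ^ r) (rows 0) j := by
  induction r generalizing j with
  | zero => simp
  | succ r ih =>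
    calc rows (r + 1) j ≤ (rows r j + rows r (j + 1)) / 2 := rows_succ_le r j
      _ ≤ ((average ^ r) (rows 0) j + (average ^ r) (rows 0) (j + 1)) / 2 := by
        linarith [ih j, ih (j + 1)]
      _ = average ((average ^ r) (rows 0)) j := by
        simp [average, shift, LinearMap.funLeft_apply]; ring
      _ = (average ^ (r + 1)) (rows 0) j := by rw [pow_succ', Module.End.mul_apply]

lemma bernsteinSum_left_le
    (rows_succ_le : ∀ r j, rows (r + 1) j ≤ (rows r j + rows r (j + 1)) / 2)
    {t : ℝ} (ht : t ∈ Set.Icc (0 : ℝ) 1) :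
    bernsteinSum n (fun j => rows j 0) t ≤ bernsteinSum n (rows 0) (t / 2) := by
  have split : (t / 2) • shift + (1 - t / 2) • (1 : Module.End ℝ (ℕ → ℝ)) =
      t • average + (1 - t) • 1 := by
    unfold average; module
  rw [bernsteinSum_eq_shift_pow _ (t / 2), split, ← bernsteinSum_pow_apply (Commute.one_left _)]
  refine bernsteinSum_le_bernsteinSum ht fun j _ => ?_
  rw [one_pow, mul_one]
  exact rows_le_average_pow rows_succ_le j 0

lemma bernsteinSum_right_le
    (rows_succ_le : ∀ r j, rows (r + 1) j ≤ (rows r j + rows r (j + 1)) / 2)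
    {t : ℝ} (ht : t ∈ Set.Icc (0 : ℝ) 1) :
    bernsteinSum n (fun j => rows (n - j) j) t ≤ bernsteinSum n (rows 0) ((1 + t) / 2) := by
  have split : ((1 + t) / 2) • shift + (1 - (1 + t) / 2) • (1 : Module.End ℝ (ℕ → ℝ)) =
      t • shift + (1 - t) • average := by
    unfold average; module
  have hcomm : Commute average shift :=
    ((Commute.one_left _).add_left (Commute.refl _)).smul_left _
  rw [bernsteinSum_eq_shift_pow _ ((1 + t) / 2), split, ← bernsteinSum_pow_apply hcomm]
  refine bernsteinSum_le_bernsteinSum ht fun j _ => ?_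
  rw [Module.End.mul_apply, shift_pow_apply, zero_add]
  exact rows_le_average_pow rows_succ_le (n - j) j

end Halving

variable {ι : Type*} [Fintype ι] [DecidableEq ι]

/-- The tensor-product Bernstein polynomial of degree `n` in each variable with coefficients `c`. -/
noncomputable def bernsteinEval (n : ℕ) (c : (ι → Fin (n + 1)) → ℝ) (x : ι → ℝ) : ℝ :=
  ∑ m, c m * ∏ i, (bernsteinPolynomial ℝ n (m i)).eval (x i)

section Linear

variable (c c' : (ι → Fin (n + 1)) → ℝ) (x : ι → ℝ)

lemma bernsteinEval_add :
    bernsteinEval n (fun m => c m + c' m) x = bernsteinEval n c x + bernsteinEval n c' x := by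
  simp only [bernsteinEval, add_mul, Finset.sum_add_distrib]

lemma bernsteinEval_const_mul (s : ℝ) :
    bernsteinEval n (fun m => s * c m) x = s * bernsteinEval n c x := by
  simp only [bernsteinEval, mul_assoc, Finset.mul_sum]

lemma bernsteinEval_const (s : ℝ) : bernsteinEval n (fun _ => s) x = s := by
  have sum_eval (t : ℝ) : ∑ j : Fin (n + 1), (bernsteinPolynomial ℝ n j).eval t = 1 := by
    rw [Fin.sum_univ_eq_sum_range fun j => (bernsteinPolynomial ℝ n j).eval t,
      ← Polynomial.eval_finsetSum, bernsteinPolynomial.sum, Polynomial.eval_one]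
  rw [bernsteinEval, ← Finset.mul_sum,
    ← Fintype.prod_sum fun i (j : Fin (n + 1)) => (bernsteinPolynomial ℝ n j).eval (x i)]
  simp only [sum_eval, Finset.prod_const_one, mul_one]

end Linear

lemma bernsteinEval_le_bernsteinEval {c c' : (ι → Fin (n + 1)) → ℝ} {x : ι → ℝ}
    (hx : ∀ i, x i ∈ Set.Icc (0 : ℝ) 1) (h : ∀ m, c m ≤ c' m) :
    bernsteinEval n c x ≤ bernsteinEval n c' x :=
  Finset.sum_le_sum fun m _ => mul_le_mul_of_nonneg_right (h m) <|
    Finset.prod_nonneg fun i _ => eval_bernsteinPolynomial_nonneg n (m i) (hx i)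

open Function in
lemma bernsteinEval_update (c : (ι → Fin (n + 1)) → ℝ) (x : ι → ℝ) (i : ι) (t : ℝ) :
    bernsteinEval n c (update x i t) = ∑ m' : {j // j ≠ i} → Fin (n + 1),
      (∏ j, (bernsteinPolynomial ℝ n (m' j)).eval (x j)) *
        ∑ k, c (update (fun j => if h : j = i then 0 else m' ⟨j, h⟩) i k) *
          (bernsteinPolynomial ℝ n k).eval t := by
  rw [bernsteinEval, ← (Equiv.funSplitAt i (Fin (n + 1))).symm.sum_comp,
    Fintype.sum_prod_type_right]
  refine Finset.sum_congr rfl fun m' _ => ?_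
  rw [Finset.mul_sum]
  refine Finset.sum_congr rfl fun k _ => ?_
  have key : (Equiv.funSplitAt i (Fin (n + 1))).symm (k, m') =
      update (fun j => if h : j = i then 0 else m' ⟨j, h⟩) i k := by
    funext j
    by_cases h : j = i <;> simp [Equiv.funSplitAt, h]
  rw [key, Fintype.prod_eq_mul_prod_subtype_ne _ i]
  have off_axis (j : {j // j ≠ i}) : (bernsteinPolynomial ℝ n
      (update (fun j => if h : j = i then 0 else m' ⟨j, h⟩) i k j)).eval (update x i t j) =
        (bernsteinPolynomial ℝ n (m' j)).eval (x j) := by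
    simp [j.2]
  simp only [off_axis, update_self]
  ring

open Function in
lemma bernsteinEval_le_bernsteinEval_update {c c' : (ι → Fin (n + 1)) → ℝ}
    {x : ι → ℝ} (hx : ∀ i, x i ∈ Set.Icc (0 : ℝ) 1) (i : ι) (t : ℝ)
    (h : ∀ m, ∑ k, c (update m i k) * (bernsteinPolynomial ℝ n k).eval (x i) ≤
      ∑ k, c' (update m i k) * (bernsteinPolynomial ℝ n k).eval t) :
    bernsteinEval n c x ≤ bernsteinEval n c' (update x i t) := by
  rw [← update_eq_self i x, bernsteinEval_update, update_eq_self, bernsteinEval_update]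
  exact Finset.sum_le_sum fun m' _ => mul_le_mul_of_nonneg_left (h _) <|
    Finset.prod_nonneg fun j _ => eval_bernsteinPolynomial_nonneg n _ (hx j)

end Bernstein

/-! ### Tensors packed into natural numbers -/

section Digits

variable {v w : ℕ}

/-- The `q`-th digit of `y` in base `2 ^ w`. -/
def digit (w y q : ℕ) : ℕ := y / 2 ^ (w * q) % 2 ^ w

lemma digit_lt (w y q : ℕ) : digit w y q < 2 ^ w := Nat.mod_lt _ (by positivity)

lemma digit_zero_left (w q : ℕ) : digit w 0 q = 0 := by simp [digit]

lemma digit_zero_right (w y : ℕ) : digit w y 0 = y % 2 ^ w := by simp [digit]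

lemma digit_shiftRight (w y s q : ℕ) : digit w (y >>> (w * s)) q = digit w y (q + s) := by
  rw [digit, digit, Nat.shiftRight_eq_div_pow, Nat.div_div_eq_div_mul, ← pow_add, ← mul_add,
    add_comm]

lemma digit_succ (w y q : ℕ) : digit w y (q + 1) = digit w (y / 2 ^ w) q := by
  rw [← digit_shiftRight, mul_one, Nat.shiftRight_eq_div_pow]

lemma digit_eq_zero_of_lt {y s q : ℕ} (hy : y < 2 ^ (w * s)) (hq : s ≤ q) : digit w y q = 0 := by
  rw [digit, Nat.div_eq_of_lt, Nat.zero_mod]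
  exact hy.trans_le (Nat.pow_le_pow_right two_pos (Nat.mul_le_mul_left w hq))

lemma digit_shiftLeft_add (w y s q : ℕ) : digit w (y <<< (w * s)) (s + q) = digit w y q := by
  rw [digit, digit, Nat.shiftLeft_eq, mul_add, pow_add, ← Nat.div_div_eq_div_mul,
    Nat.mul_div_cancel _ (by positivity)]

lemma digit_shiftLeft_of_lt (y : ℕ) {s q : ℕ} (h : q < s) : digit w (y <<< (w * s)) q = 0 := by
  obtain ⟨t, rfl⟩ := Nat.exists_eq_add_of_lt h
  rw [digit, Nat.shiftLeft_eq, mul_add, mul_add, mul_one, pow_add, pow_add,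
    show y * (2 ^ (w * q) * 2 ^ (w * t) * 2 ^ w) =
      2 ^ (w * q) * (2 ^ w * (y * 2 ^ (w * t))) by ring,
    Nat.mul_div_cancel_left _ (by positivity), Nat.mul_mod_right]

lemma digit_and (w a b q : ℕ) : digit w (a &&& b) q = digit w a q &&& digit w b q := by
  rw [digit, digit, digit, Nat.and_div_two_pow, Nat.and_mod_two_pow]

lemma digit_or (w a b q : ℕ) : digit w (a ||| b) q = digit w a q ||| digit w b q := by
  rw [digit, digit, digit, Nat.or_div_two_pow, Nat.or_mod_two_pow]

lemma digit_add {a b : ℕ} (h : ∀ q, digit w a q + digit w b q < 2 ^ w) (q : ℕ) :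
    digit w (a + b) q = digit w a q + digit w b q := by
  have no_carry : a % 2 ^ w + b % 2 ^ w < 2 ^ w := by
    simpa only [digit_zero_right] using h 0
  induction q generalizing a b with
  | zero => simp only [digit_zero_right, Nat.add_mod_of_add_mod_lt no_carry]
  | succ q ih =>
    have h' (r : ℕ) : digit w (a / 2 ^ w) r + digit w (b / 2 ^ w) r < 2 ^ w := by
      simpa only [digit_succ] using h (r + 1)
    rw [digit_succ, Nat.add_div_eq_of_add_mod_lt no_carry, digit_succ w a, digit_succ w b]
    exact ih h' (by simpa only [digit_zero_right] using h' 0)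

lemma digit_const_mul (s : ℕ) {a : ℕ} (h : ∀ q, s * digit w a q < 2 ^ w) (q : ℕ) :
    digit w (s * a) q = s * digit w a q := by
  induction s generalizing q with
  | zero => simp only [zero_mul, digit_zero_left]
  | succ s ih =>
    simp only [add_mul, one_mul] at h ⊢
    have ih := ih fun r => (Nat.le_add_right _ _).trans_lt (h r)
    rw [digit_add fun r => by rw [ih]; exact h r, ih]

lemma digit_shiftRight_one_and (w a q : ℕ) :
    digit (w + 1) (a >>> 1) q &&& (2 ^ w - 1) = digit (w + 1) a q / 2 := by
  rw [Nat.and_two_pow_sub_one_eq_mod, digit, digit, Nat.shiftRight_eq_div_pow,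
    Nat.div_div_eq_div_mul, mul_comm (2 ^ 1), ← Nat.div_div_eq_div_mul,
    Nat.mod_mod_of_dvd _ (pow_dvd_pow 2 w.le_succ), pow_one, pow_succ' 2 w,
    Nat.mod_mul_right_div_self]

/-- Replaces the digits `y_q` of `y` in base `2 ^ v` by the digits `f (q₀ + q) y_q` in base
`2 ^ w`, for `q < 2 ^ e`. Halving the range instead of scanning it keeps the shifts balanced. -/
def mapDigits (v w : ℕ) (f : ℕ → ℕ → ℕ) : (e q₀ y : ℕ) → ℕ
  | 0, q₀, y => f q₀ (y % 2 ^ v)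
  | e + 1, q₀, y =>
    mapDigits v w f e q₀ (y % 2 ^ (v * 2 ^ e)) |||
      mapDigits v w f e (q₀ + 2 ^ e) (y >>> (v * 2 ^ e)) <<< (w * 2 ^ e)

lemma mapDigits_lt {f : ℕ → ℕ → ℕ} (hf : ∀ q c, f q c < 2 ^ w) (e q₀ y : ℕ) :
    mapDigits v w f e q₀ y < 2 ^ (w * 2 ^ e) := by
  induction e generalizing q₀ y with
  | zero => simpa only [mapDigits, pow_zero, mul_one] using hf _ _
  | succ e ih =>
    rw [pow_succ', two_mul, mul_add]
    refine Nat.or_lt_two_pow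
      ((ih _ _).trans_le (Nat.pow_le_pow_right two_pos (Nat.le_add_right _ _))) ?_
    rw [Nat.shiftLeft_eq, pow_add]
    exact Nat.mul_lt_mul_of_pos_right (ih _ _) (by positivity)

lemma digit_mod_two_pow {y s q : ℕ} (hq : q < s) : digit w (y % 2 ^ (w * s)) q = digit w y q := by
  obtain ⟨t, rfl⟩ := Nat.exists_eq_add_of_lt hq
  rw [digit, digit, add_assoc, mul_add, pow_add, Nat.mod_mul_right_div_self,
    Nat.mod_mod_of_dvd _ (pow_dvd_pow 2 (Nat.le_mul_of_pos_right w t.succ_pos))]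

lemma digit_mapDigits {f : ℕ → ℕ → ℕ} (hf : ∀ q c, f q c < 2 ^ w) {e r : ℕ} (hr : r < 2 ^ e)
    (q₀ y : ℕ) : digit w (mapDigits v w f e q₀ y) r = f (q₀ + r) (digit v y r) := by
  induction e generalizing q₀ y r with
  | zero =>
    obtain rfl : r = 0 := Nat.lt_one_iff.1 hr
    rw [mapDigits, digit_zero_right, digit_zero_right, Nat.mod_eq_of_lt (hf _ _), add_zero]
  | succ e ih =>
    rw [mapDigits, digit_or]
    rcases lt_or_ge r (2 ^ e) with low | high
    · rw [digit_shiftLeft_of_lt _ low, Nat.or_zero, ih low, digit_mod_two_pow low]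
    · obtain ⟨s, rfl⟩ := Nat.exists_eq_add_of_le high
      rw [digit_eq_zero_of_lt (mapDigits_lt hf _ _ _) high, Nat.zero_or, digit_shiftLeft_add,
        ih (by rw [pow_succ] at hr; lia), digit_shiftRight, add_assoc, add_comm s]

end Digits

section Tensors

variable {n d : ℕ}

/-- The position of the multi-index `m` in the packed representation of a tensor. -/
def flatIndex (m : Fin d → Fin (n + 1)) : ℕ := finFunctionFinEquiv m

/-- The `i`-th component of the multi-index at position `q`. -/
def coord (n : ℕ) (i : Fin d) (q : ℕ) : ℕ := q / (n + 1) ^ (i : ℕ) % (n + 1)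

lemma flatIndex_lt (m : Fin d → Fin (n + 1)) : flatIndex m < (n + 1) ^ d :=
  (finFunctionFinEquiv m).isLt

lemma coord_flatIndex (i : Fin d) (m : Fin d → Fin (n + 1)) : coord n i (flatIndex m) = m i :=
  congrArg Fin.val (congrFun (finFunctionFinEquiv.symm_apply_apply m) i)

lemma flatIndex_update (m : Fin d → Fin (n + 1)) (i : Fin d) (k : Fin (n + 1)) :
    flatIndex (Function.update m i k) =
      (n + 1) ^ (i : ℕ) * k + flatIndex (Function.update m i 0) := by
  simp only [flatIndex, finFunctionFinEquiv_apply, Fintype.sum_eq_add_sum_subtype_ne _ i,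
    Function.update_self, Fin.val_zero, zero_mul, zero_add, mul_comm (k : ℕ)]
  congr 1
  exact Fintype.sum_congr _ _ fun j => by simp only [Function.update_of_ne j.2]

/-- A number of binary digits sufficient for the positions of a tensor. -/
def indexBits (n d : ℕ) : ℕ := Nat.log2 ((n + 1) ^ d) + 1

lemma lt_two_pow_indexBits {q : ℕ} (hq : q < (n + 1) ^ d) : q < 2 ^ indexBits n d :=
  hq.trans Nat.lt_log2_self

/-- The number whose digits in base `2 ^ w` are `f q` for the positions `q` of a tensor. -/
def pack (w n d : ℕ) (f : ℕ → ℕ) : ℕ :=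
  mapDigits 0 w (fun q _ => if q < (n + 1) ^ d then f q else 0) (indexBits n d) 0 0

lemma digit_pack {w : ℕ} {f : ℕ → ℕ} (hf : ∀ q, f q < 2 ^ w) (q : ℕ) :
    digit w (pack w n d f) q = if q < (n + 1) ^ d then f q else 0 := by
  have bound (q _c : ℕ) : (if q < (n + 1) ^ d then f q else 0) < 2 ^ w := by
    split_ifs <;> simp [hf]
  rcases lt_or_ge q (2 ^ indexBits n d) with inside | outside
  · rw [pack, digit_mapDigits bound inside, zero_add]
  · rw [pack, digit_eq_zero_of_lt (mapDigits_lt bound _ _ _) outside,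
      if_neg fun hq => (lt_two_pow_indexBits hq).not_ge outside]

/-- The tensor all of whose entries are `c`. -/
def constDigits (w n d c : ℕ) : ℕ := pack w n d fun _ => c

lemma digit_constDigits {w c : ℕ} (hc : c < 2 ^ w) (q : ℕ) :
    digit w (constDigits w n d c) q = if q < (n + 1) ^ d then c else 0 :=
  digit_pack (fun _ => hc) q

lemma two_pow_le_of_and_eq {w k y q : ℕ} (hk : k < w) (hq : q < (n + 1) ^ d)
    (h : y &&& constDigits w n d (2 ^ k) = constDigits w n d (2 ^ k)) : 2 ^ k ≤ digit w y q := by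
  have digits := congrArg (digit w · q) h
  simp only [digit_and, digit_constDigits (Nat.pow_lt_pow_right one_lt_two hk), if_pos hq] at digits
  exact digits ▸ Nat.and_le_left

end Tensors

/-! ### Subdividing packed tensors -/

section Subdivision

variable {n d : ℕ} {i : Fin d}

/-- The bitwise disjunction of `f k` for `k < N`. -/
def orRange (f : ℕ → ℕ) : (N : ℕ) → ℕ
  | 0 => 0
  | k + 1 => orRange f k ||| f k

lemma digit_orRange (w : ℕ) (f : ℕ → ℕ) (N q : ℕ) :
    digit w (orRange f N) q = orRange (fun k => digit w (f k) q) N := by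
  induction N with
  | zero => exact digit_zero_left w q
  | succ N ih => rw [orRange, orRange, digit_or, ih]

lemma orRange_lt_two_pow {f : ℕ → ℕ} {p : ℕ} (hf : ∀ k, f k < 2 ^ p) (N : ℕ) :
    orRange f N < 2 ^ p := by
  induction N with
  | zero => exact Nat.two_pow_pos p
  | succ N ih => exact Nat.or_lt_two_pow ih (hf N)

lemma orRange_eq_ite {f : ℕ → ℕ} {l N : ℕ} (hf : ∀ k < N, k ≠ l → f k = 0) :
    orRange f N = if l < N then f l else 0 := by
  induction N with
  | zero => rfl
  | succ N ih =>
    rw [orRange, ih fun k hk => hf k (hk.trans N.lt_succ_self)]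
    rcases lt_trichotomy l N with lt | rfl | gt
    · rw [if_pos lt, if_pos (lt.trans N.lt_succ_self), hf N N.lt_succ_self lt.ne', Nat.or_zero]
    · rw [if_neg (lt_irrefl l), if_pos l.lt_succ_self, Nat.zero_or]
    · rw [if_neg gt.not_gt, if_neg (by lia), hf N N.lt_succ_self gt.ne, Nat.or_zero]

/-- The mask of the entries whose `i`-th index is `k`. -/
def sliceMask (n : ℕ) (i : Fin d) (k : ℕ) : ℕ :=
  pack 64 n d (fun q => if coord n i q = 0 then 2 ^ 64 - 1 else 0) <<<
    (64 * ((n + 1) ^ (i : ℕ) * k))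

lemma coord_add_eq_iff {k : ℕ} (hk : k < n + 1) (r : ℕ) :
    coord n i ((n + 1) ^ (i : ℕ) * k + r) = k ↔ coord n i r = 0 := by
  rw [coord, coord, Nat.mul_add_div (by positivity)]
  constructor
  · intro h
    have : k + r / (n + 1) ^ (i : ℕ) ≡ k + 0 [MOD n + 1] := h.trans (Nat.mod_eq_of_lt hk).symm
    exact Nat.ModEq.add_left_cancel' k this
  · intro h
    rw [← Nat.add_mod_mod, h, add_zero, Nat.mod_eq_of_lt hk]

lemma digit_sliceMask {k q : ℕ} (hk : k < n + 1) (hq : q < (n + 1) ^ d) :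
    digit 64 (sliceMask n i k) q = if coord n i q = k then 2 ^ 64 - 1 else 0 := by
  have mask_lt (r : ℕ) : (if coord n i r = 0 then 2 ^ 64 - 1 else 0) < 2 ^ 64 := by
    split_ifs <;> norm_num
  rcases lt_or_ge q ((n + 1) ^ (i : ℕ) * k) with low | high
  · have ne : coord n i q ≠ k := fun h => low.not_ge <| calc
      (n + 1) ^ (i : ℕ) * k ≤ (n + 1) ^ (i : ℕ) * (q / (n + 1) ^ (i : ℕ)) :=
        Nat.mul_le_mul_left _ (h ▸ Nat.mod_le _ _)
      _ ≤ q := Nat.mul_div_le _ _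
    rw [sliceMask, digit_shiftLeft_of_lt _ low, if_neg ne]
  · obtain ⟨r, rfl⟩ := Nat.exists_eq_add_of_le high
    rw [sliceMask, digit_shiftLeft_add, digit_pack mask_lt,
      if_pos ((Nat.le_add_left r _).trans_lt hq), if_congr (coord_add_eq_iff hk r) rfl rfl]

/-- The tensor whose `k`-th slice orthogonal to the axis `i` is that of `f k`. -/
def assemble (n : ℕ) (i : Fin d) (f : ℕ → ℕ) : ℕ :=
  orRange (fun k => f k &&& sliceMask n i k) (n + 1)

lemma digit_assemble (f : ℕ → ℕ) (m : Fin d → Fin (n + 1)) :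
    digit 64 (assemble n i f) (flatIndex m) = digit 64 (f (m i)) (flatIndex m) := by
  have masked {k : ℕ} (hk : k < n + 1) : digit 64 (f k &&& sliceMask n i k) (flatIndex m) =
      if (m i : ℕ) = k then digit 64 (f k) (flatIndex m) else 0 := by
    rw [digit_and, digit_sliceMask hk (flatIndex_lt m), coord_flatIndex]
    split_ifs
    · exact Nat.and_two_pow_sub_one_of_lt_two_pow (digit_lt 64 _ _)
    · exact Nat.and_zero _
  rw [assemble, digit_orRange, orRange_eq_ite (l := m i) fun k hk ne => by
      rw [masked hk, if_neg ne.symm], if_pos (m i).isLt, masked (m i).isLt, if_pos rfl]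

lemma digit_assemble_lt {f : ℕ → ℕ} {p : ℕ} (hf : ∀ k q, digit 64 (f k) q < 2 ^ p) (q : ℕ) :
    digit 64 (assemble n i f) q < 2 ^ p := by
  rw [assemble, digit_orRange]
  refine orRange_lt_two_pow (fun k => ?_) _
  rw [digit_and]
  exact Nat.and_le_left.trans_lt (hf k q)

/-- The averages, rounded down, of the entries of `c` that are neighbours along the axis `i`.
Entries without a neighbour on their line are averaged with an unrelated entry. -/
def averageAlong (n : ℕ) (i : Fin d) (c : ℕ) : ℕ :=
  ((c + c >>> (64 * (n + 1) ^ (i : ℕ))) >>> 1) &&& constDigits 64 n d (2 ^ 63 - 1)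

lemma digit_averageAlong {c : ℕ} (hc : ∀ q, digit 64 c q < 2 ^ 63) (q : ℕ) :
    digit 64 (averageAlong n i c) q = if q < (n + 1) ^ d then
      (digit 64 c q + digit 64 c (q + (n + 1) ^ (i : ℕ))) / 2 else 0 := by
  have sum_lt (r : ℕ) :
      digit 64 c r + digit 64 (c >>> (64 * (n + 1) ^ (i : ℕ))) r < 2 ^ 64 := by
    rw [digit_shiftRight]
    linarith [hc r, hc (r + (n + 1) ^ (i : ℕ))]
  rw [averageAlong, digit_and, digit_constDigits (by norm_num)]
  split_ifs
  · rw [digit_shiftRight_one_and 63, digit_add sum_lt, digit_shiftRight]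
  · exact Nat.and_zero _

/-- The rows of de Casteljau's algorithm along the axis `i`. -/
def deCasteljau (n : ℕ) (i : Fin d) (c : ℕ) : (r : ℕ) → ℕ
  | 0 => c
  | r + 1 => averageAlong n i (deCasteljau n i c r)

lemma digit_deCasteljau_lt {c p : ℕ} (hp : p ≤ 63) (hc : ∀ q, digit 64 c q < 2 ^ p) (r q : ℕ) :
    digit 64 (deCasteljau n i c r) q < 2 ^ p := by
  induction r generalizing q with
  | zero => exact hc q
  | succ r ih =>
    rw [deCasteljau, digit_averageAlong fun q => (ih q).trans_le (Nat.pow_le_pow_right two_pos hp)]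
    split_ifs
    · linarith [Nat.div_mul_le_self (digit 64 (deCasteljau n i c r) q +
        digit 64 (deCasteljau n i c r) (q + (n + 1) ^ (i : ℕ))) 2, ih q, ih (q + (n + 1) ^ (i : ℕ))]
    · positivity

lemma digit_deCasteljau_succ_le {c : ℕ} (hc : ∀ q, digit 64 c q < 2 ^ 63) (r q : ℕ) :
    (digit 64 (deCasteljau n i c (r + 1)) q : ℝ) ≤ (digit 64 (deCasteljau n i c r) q +
      digit 64 (deCasteljau n i c r) (q + (n + 1) ^ (i : ℕ))) / 2 := by
  rw [deCasteljau, digit_averageAlong (digit_deCasteljau_lt le_rfl hc r)]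
  split_ifs
  · exact_mod_cast Nat.cast_div_le (α := ℝ)
  · rw [Nat.cast_zero]
    positivity

/-- The coefficients over the lower half of the cube along the axis `i`, rounded down. -/
def leftHalf (n : ℕ) (i : Fin d) (c : ℕ) : ℕ :=
  assemble n i fun k => deCasteljau n i c k <<< (64 * ((n + 1) ^ (i : ℕ) * k))

/-- The coefficients over the upper half of the cube along the axis `i`, rounded down. -/
def rightHalf (n : ℕ) (i : Fin d) (c : ℕ) : ℕ :=
  assemble n i fun k => deCasteljau n i c (n - k)

/-- The real tensor with the entries of the packed tensor `c`. -/
def unpack (n d c : ℕ) (m : Fin d → Fin (n + 1)) : ℝ := digit 64 c (flatIndex m)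

/-- Row `r` of de Casteljau's algorithm along the axis `i`, read on the line through `m`. -/
def lineRows (c : ℕ) (i : Fin d) (m : Fin d → Fin (n + 1)) (r j : ℕ) : ℝ :=
  digit 64 (deCasteljau n i c r) ((n + 1) ^ (i : ℕ) * j + flatIndex (Function.update m i 0))

lemma lineRows_succ_le {c : ℕ} (hc : ∀ q, digit 64 c q < 2 ^ 63) (m : Fin d → Fin (n + 1))
    (r j : ℕ) : lineRows c i m (r + 1) j ≤ (lineRows c i m r j + lineRows c i m r (j + 1)) / 2 := by
  have next : (n + 1) ^ (i : ℕ) * (j + 1) + flatIndex (Function.update m i 0) =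
      (n + 1) ^ (i : ℕ) * j + flatIndex (Function.update m i 0) + (n + 1) ^ (i : ℕ) := by ring
  rw [lineRows, lineRows, lineRows, next]
  exact digit_deCasteljau_succ_le hc r _

lemma sum_eq_bernsteinSum (a : ℕ → ℝ) (t : ℝ) :
    ∑ k : Fin (n + 1), a k * (bernsteinPolynomial ℝ n k).eval t = bernsteinSum n a t :=
  Fin.sum_univ_eq_sum_range (fun k => a k * (bernsteinPolynomial ℝ n k).eval t) (n + 1)

lemma unpack_update (c : ℕ) (m : Fin d → Fin (n + 1)) (k : Fin (n + 1)) :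
    unpack n d c (Function.update m i k) = lineRows c i m 0 k := by
  rw [unpack, flatIndex_update, lineRows, deCasteljau]

variable {c : ℕ} {x : Fin d → ℝ}

lemma bernsteinEval_leftHalf_le (hc : ∀ q, digit 64 c q < 2 ^ 63)
    (hx : ∀ j, x j ∈ Set.Icc (0 : ℝ) 1) : bernsteinEval n (unpack n d (leftHalf n i c)) x ≤
      bernsteinEval n (unpack n d c) (Function.update x i (x i / 2)) := by
  refine bernsteinEval_le_bernsteinEval_update hx i _ fun m => ?_
  have left (k : Fin (n + 1)) :
      unpack n d (leftHalf n i c) (Function.update m i k) = lineRows c i m k 0 := by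
    rw [unpack, leftHalf, digit_assemble, Function.update_self, flatIndex_update,
      digit_shiftLeft_add, lineRows, mul_zero, zero_add]
  simp only [left, unpack_update]
  rw [sum_eq_bernsteinSum fun k => lineRows c i m k 0, sum_eq_bernsteinSum (lineRows c i m 0)]
  exact bernsteinSum_left_le (lineRows_succ_le hc m) (hx i)

lemma bernsteinEval_rightHalf_le (hc : ∀ q, digit 64 c q < 2 ^ 63)
    (hx : ∀ j, x j ∈ Set.Icc (0 : ℝ) 1) : bernsteinEval n (unpack n d (rightHalf n i c)) x ≤
      bernsteinEval n (unpack n d c) (Function.update x i ((1 + x i) / 2)) := by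
  refine bernsteinEval_le_bernsteinEval_update hx i _ fun m => ?_
  have right (k : Fin (n + 1)) :
      unpack n d (rightHalf n i c) (Function.update m i k) = lineRows c i m (n - k) k := by
    rw [unpack, rightHalf, digit_assemble, Function.update_self, flatIndex_update, lineRows]
  simp only [right, unpack_update]
  rw [sum_eq_bernsteinSum fun k => lineRows c i m (n - k) k, sum_eq_bernsteinSum (lineRows c i m 0)]
  exact bernsteinSum_right_le (lineRows_succ_le hc m) (hx i)

lemma digit_leftHalf_lt {p : ℕ} (hp : p ≤ 63) (hc : ∀ q, digit 64 c q < 2 ^ p) :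
    ∀ q, digit 64 (leftHalf n i c) q < 2 ^ p := by
  refine digit_assemble_lt fun k q => ?_
  rcases lt_or_ge q ((n + 1) ^ (i : ℕ) * k) with low | high
  · rw [digit_shiftLeft_of_lt _ low]
    positivity
  · obtain ⟨r, rfl⟩ := Nat.exists_eq_add_of_le high
    rw [digit_shiftLeft_add]
    exact digit_deCasteljau_lt hp hc k r

lemma digit_rightHalf_lt {p : ℕ} (hp : p ≤ 63) (hc : ∀ q, digit 64 c q < 2 ^ p) :
    ∀ q, digit 64 (rightHalf n i c) q < 2 ^ p :=
  digit_assemble_lt fun k => digit_deCasteljau_lt hp hc (n - k)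

end Subdivision

/-! ### Certificates of nonnegativity on the cube -/

section Certificates

variable {n d : ℕ}

/-- The dyadic interval `[num / 2 ^ exp, (num + 1) / 2 ^ exp]`. -/
structure DyadicInterval where
  num : ℕ
  exp : ℕ

namespace DyadicInterval

variable (a : DyadicInterval)

/-- The lower half of a dyadic interval. -/
def left : DyadicInterval := ⟨2 * a.num, a.exp + 1⟩

/-- The upper half of a dyadic interval. -/
def right : DyadicInterval := ⟨2 * a.num + 1, a.exp + 1⟩

/-- The affine map of the interval `a` onto `[0, 1]`. -/
noncomputable def rescale (y : ℝ) : ℝ := y * 2 ^ a.exp - a.num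

/-- The interval `a` without its left end point unless that is `0`, so that the cells of a
subdivision of `[0, 1]` are disjoint. -/
def cell : Set ℝ := {y | a.rescale y ∈ Set.Icc (0 : ℝ) 1 ∧ (a.num = 0 ∨ 0 < a.rescale y)}

variable {a}

lemma rescale_left (y : ℝ) : a.left.rescale y = 2 * a.rescale y := by
  simp only [rescale, left]
  push_cast
  ring

lemma rescale_right (y : ℝ) : a.right.rescale y = 2 * a.rescale y - 1 := by
  simp only [rescale, right]
  push_cast
  ring

lemma left_cell_subset : a.left.cell ⊆ a.cell := by
  rintro y ⟨⟨nonneg, le_one⟩, open_left⟩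
  rw [rescale_left] at *
  refine ⟨⟨by linarith, by linarith⟩, open_left.imp (fun h => ?_) fun h => by linarith⟩
  simpa [left] using h

lemma right_cell_subset : a.right.cell ⊆ a.cell := by
  rintro y ⟨⟨nonneg, le_one⟩, -⟩
  rw [rescale_right] at *
  exact ⟨⟨by linarith, by linarith⟩, .inr (by linarith)⟩

lemma mem_left_cell_or_mem_right_cell {y : ℝ} (hy : y ∈ a.cell) :
    y ∈ a.left.cell ∨ y ∈ a.right.cell := by
  obtain ⟨⟨nonneg, le_one⟩, open_left⟩ := hy
  rcases le_or_gt (2 * a.rescale y) 1 with low | high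
  · refine .inl ⟨?_, ?_⟩ <;> rw [rescale_left]
    · exact ⟨by linarith, low⟩
    · exact open_left.imp (fun h => by simp [left, h]) fun h => by linarith
  · refine .inr ⟨?_, .inr ?_⟩ <;> rw [rescale_right]
    · exact ⟨by linarith, by linarith⟩
    · linarith

lemma lt_of_mem_cell {b : DyadicInterval} {y z : ℝ} (hy : y ∈ a.cell) (hz : z ∈ b.cell)
    (h : (a.num + 1) * 2 ^ b.exp ≤ b.num * 2 ^ a.exp) : y < z := by
  have num_pos : b.num ≠ 0 := by
    intro h0
    rw [h0, zero_mul] at h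
    exact absurd h (Nat.not_le.2 (by positivity))
  have y_le : y * 2 ^ a.exp ≤ a.num + 1 := sub_le_iff_le_add'.1 hy.1.2
  have lt_z : b.num < z * 2 ^ b.exp := sub_pos.1 (hz.2.resolve_left num_pos)
  have h' : ((a.num + 1) * 2 ^ b.exp : ℝ) ≤ b.num * 2 ^ a.exp := by exact_mod_cast h
  have : y * (2 ^ a.exp * 2 ^ b.exp : ℝ) < z * (2 ^ a.exp * 2 ^ b.exp) := by
    calc y * (2 ^ a.exp * 2 ^ b.exp : ℝ) = y * 2 ^ a.exp * 2 ^ b.exp := by ring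
      _ ≤ (a.num + 1) * 2 ^ b.exp := by gcongr
      _ ≤ b.num * 2 ^ a.exp := h'
      _ < z * 2 ^ b.exp * 2 ^ a.exp := by gcongr
      _ = z * (2 ^ a.exp * 2 ^ b.exp) := by ring
  exact lt_of_mul_lt_mul_right this (by positivity)

end DyadicInterval

/-- A certificate that, on the part of the cube where the coordinates increase, `0 ≤ G` wherever
`H ≤ 0`: a dyadic subdivision whose cells are settled because all Bernstein coefficients of `G`, or
those of `G + s H`, are nonnegative, or because the cell contains no increasing point. -/
inductive Certificate (d : ℕ)
  | leaf
  | order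
  | mult (s : ℕ)
  | split (i : Fin d) (left right : Certificate d)

/-- Verifies a certificate over the box `b`, where the packed coefficients `g` and `h` of `G` and
`H` are offset by `2 ^ 62` and `2 ^ 33`. -/
def Certificate.check (n : ℕ) : Certificate d → (g h : ℕ) → (b : Fin d → DyadicInterval) → Bool
  | leaf, g, _, _ => g &&& constDigits 64 n d (2 ^ 62) == constDigits 64 n d (2 ^ 62)
  | order, _, _, b =>
    decide (∃ i j, i < j ∧ ((b j).num + 1) * 2 ^ (b i).exp ≤ (b i).num * 2 ^ (b j).exp)
  | mult s, g, h, _ =>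
    decide (s * 2 ^ 33 ≤ 2 ^ 61) &&
      (g + s * h + (2 ^ 62 - s * 2 ^ 33) * constDigits 64 n d 1) &&& constDigits 64 n d (2 ^ 63) ==
        constDigits 64 n d (2 ^ 63)
  | split i l r, g, h, b =>
    l.check n (leftHalf n i g) (leftHalf n i h) (Function.update b i (b i).left) &&
      r.check n (rightHalf n i g) (rightHalf n i h) (Function.update b i (b i).right)

/-- The packed tensor `g`, with entries below `2 ^ (p + 1)` and offset `2 ^ p`, bounds `G` from
below over the box `b`. -/
structure BoundsBelow (n p : ℕ) (b : Fin d → DyadicInterval) (g : ℕ) (G : (Fin d → ℝ) → ℝ) :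
    Prop where
  digit_lt : ∀ q, digit 64 g q < 2 ^ (p + 1)
  sub_le : ∀ y, (∀ i, y i ∈ (b i).cell) →
    bernsteinEval n (unpack n d g) (fun i => (b i).rescale (y i)) - 2 ^ p ≤ G y

namespace BoundsBelow

variable {p g h : ℕ} {b : Fin d → DyadicInterval} {G H : (Fin d → ℝ) → ℝ}

lemma restrict (hG : BoundsBelow n p b g G) {g' : ℕ} {i : Fin d} {a' : DyadicInterval}
    (hsub : a'.cell ⊆ (b i).cell) (hlt : ∀ q, digit 64 g' q < 2 ^ (p + 1))
    (hle : ∀ x : Fin d → ℝ, (∀ j, x j ∈ Set.Icc (0 : ℝ) 1) → ∀ y : ℝ, x i = a'.rescale y →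
      bernsteinEval n (unpack n d g') x ≤
        bernsteinEval n (unpack n d g) (Function.update x i ((b i).rescale y))) :
    BoundsBelow n p (Function.update b i a') g' G := by
  refine ⟨hlt, fun y hy => ?_⟩
  have hyi : y i ∈ a'.cell := by simpa using hy i
  have hy' (j : Fin d) : y j ∈ (b j).cell := by
    by_cases hj : j = i
    · exact hj ▸ hsub hyi
    · simpa [hj] using hy j
  have rescale_eq : Function.update (fun j => (Function.update b i a' j).rescale (y j)) i
      ((b i).rescale (y i)) = fun j => (b j).rescale (y j) := by
    funext j
    by_cases hj : j = i
    · subst hj; simp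
    · simp [hj]
  have := hle (fun j => (Function.update b i a' j).rescale (y j)) (fun j => (hy j).1) (y i)
    (by simp)
  rw [rescale_eq] at this
  exact (sub_le_sub_right this _).trans (hG.sub_le y hy')

lemma leftHalf (hG : BoundsBelow n p b g G) (hp : p < 63) (i : Fin d) :
    BoundsBelow n p (Function.update b i (b i).left) (leftHalf n i g) G := by
  refine hG.restrict DyadicInterval.left_cell_subset (digit_leftHalf_lt hp hG.digit_lt)
    fun x hx y hxi => ?_
  have hg (q : ℕ) : digit 64 g q < 2 ^ 63 :=
    (hG.digit_lt q).trans_le (Nat.pow_le_pow_right two_pos hp)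
  convert bernsteinEval_leftHalf_le hg hx using 3
  rw [hxi, DyadicInterval.rescale_left]
  ring

lemma rightHalf (hG : BoundsBelow n p b g G) (hp : p < 63) (i : Fin d) :
    BoundsBelow n p (Function.update b i (b i).right) (rightHalf n i g) G := by
  refine hG.restrict DyadicInterval.right_cell_subset (digit_rightHalf_lt hp hG.digit_lt)
    fun x hx y hxi => ?_
  have hg (q : ℕ) : digit 64 g q < 2 ^ 63 :=
    (hG.digit_lt q).trans_le (Nat.pow_le_pow_right two_pos hp)
  convert bernsteinEval_rightHalf_le hg hx using 3
  rw [hxi, DyadicInterval.rescale_right]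
  ring

lemma nonneg_of_leaf (hG : BoundsBelow n 62 b g G)
    (hleaf : g &&& constDigits 64 n d (2 ^ 62) = constDigits 64 n d (2 ^ 62)) {y : Fin d → ℝ}
    (hy : ∀ i, y i ∈ (b i).cell) : 0 ≤ G y := by
  refine le_trans (sub_nonneg.2 ?_) (hG.sub_le y hy)
  rw [← bernsteinEval_const (n := n) (fun i => (b i).rescale (y i)) (2 ^ 62)]
  refine bernsteinEval_le_bernsteinEval (fun i => (hy i).1) fun m => ?_
  rw [unpack]
  exact_mod_cast two_pow_le_of_and_eq (by norm_num) (flatIndex_lt m) hleaf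

lemma digit_combination (hG : BoundsBelow n 62 b g G) (hH : BoundsBelow n 33 b h H) {s : ℕ}
    (hs : s * 2 ^ 33 ≤ 2 ^ 61) {q : ℕ} (hq : q < (n + 1) ^ d) :
    digit 64 (g + s * h + (2 ^ 62 - s * 2 ^ 33) * constDigits 64 n d 1) q =
      digit 64 g q + s * digit 64 h q + (2 ^ 62 - s * 2 ^ 33) := by
  have h_lt (r : ℕ) : s * digit 64 h r ≤ 2 ^ 62 := calc
    s * digit 64 h r ≤ s * 2 ^ 34 := Nat.mul_le_mul_left s (hH.digit_lt r).le
    _ ≤ 2 ^ 62 := by lia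
  have mul_digit := digit_const_mul s fun r => (h_lt r).trans_lt (by norm_num)
  have add_digit := digit_add (w := 64) (a := g) (b := s * h) fun r => by
    rw [mul_digit r]
    exact (Nat.add_lt_add_of_lt_of_le (hG.digit_lt r) (h_lt r)).trans (by norm_num)
  have ones_le (r : ℕ) : (2 ^ 62 - s * 2 ^ 33) * digit 64 (constDigits 64 n d 1) r ≤ 2 ^ 62 := by
    rw [digit_constDigits (by norm_num)]
    split_ifs <;> lia
  have ones_digit := digit_const_mul (2 ^ 62 - s * 2 ^ 33) fun r =>
    (ones_le r).trans_lt (by norm_num)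
  rw [digit_add fun r => ?_, add_digit, mul_digit, ones_digit, digit_constDigits (by norm_num),
    if_pos hq, mul_one]
  rw [add_digit, mul_digit, ones_digit]
  exact (Nat.add_lt_add_of_lt_of_le (Nat.add_lt_add_of_lt_of_le (hG.digit_lt r) (h_lt r))
    (ones_le r)).trans_eq (by norm_num)

lemma nonneg_of_mult (hG : BoundsBelow n 62 b g G) (hH : BoundsBelow n 33 b h H) {s : ℕ}
    (hs : s * 2 ^ 33 ≤ 2 ^ 61)
    (hmult : (g + s * h + (2 ^ 62 - s * 2 ^ 33) * constDigits 64 n d 1) &&&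
      constDigits 64 n d (2 ^ 63) = constDigits 64 n d (2 ^ 63))
    {y : Fin d → ℝ} (hy : ∀ i, y i ∈ (b i).cell) (hHy : H y ≤ 0) : 0 ≤ G y := by
  have le_eval : ((2 ^ 62 + s * 2 ^ 33 : ℕ) : ℝ) ≤
      bernsteinEval n (unpack n d g) (fun i => (b i).rescale (y i)) +
        s * bernsteinEval n (unpack n d h) (fun i => (b i).rescale (y i)) := by
    rw [← bernsteinEval_const_mul, ← bernsteinEval_add,
      ← bernsteinEval_const (n := n) (fun i => (b i).rescale (y i)) ((2 ^ 62 + s * 2 ^ 33 : ℕ) : ℝ)]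
    refine bernsteinEval_le_bernsteinEval (fun i => (hy i).1) fun m => ?_
    have large := two_pow_le_of_and_eq (by norm_num) (flatIndex_lt m) hmult
    rw [digit_combination hG hH hs (flatIndex_lt m)] at large
    have : 2 ^ 62 + s * 2 ^ 33 ≤ digit 64 g (flatIndex m) + s * digit 64 h (flatIndex m) := by lia
    rw [unpack, unpack]
    exact_mod_cast this
  push_cast at le_eval
  have G_le := hG.sub_le y hy
  have H_le := mul_le_mul_of_nonneg_left ((hH.sub_le y hy).trans hHy) (Nat.cast_nonneg (α := ℝ) s)
  linarith

end BoundsBelow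

theorem Certificate.nonneg_of_check {G H : (Fin d → ℝ) → ℝ} (t : Certificate d) {g h : ℕ}
    {b : Fin d → DyadicInterval} (hG : BoundsBelow n 62 b g G) (hH : BoundsBelow n 33 b h H)
    (hcheck : t.check n g h b) {y : Fin d → ℝ} (hy : ∀ i, y i ∈ (b i).cell) (mono : Monotone y)
    (hHy : H y ≤ 0) : 0 ≤ G y := by
  induction t generalizing g h b with
  | leaf => exact hG.nonneg_of_leaf (eq_of_beq hcheck) hy
  | order =>
    obtain ⟨i, j, hij, h⟩ := of_decide_eq_true hcheck
    exact absurd (mono hij.le) (DyadicInterval.lt_of_mem_cell (hy j) (hy i) h).not_ge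
  | mult s =>
    rw [check, Bool.and_eq_true, decide_eq_true_eq, beq_iff_eq] at hcheck
    exact hG.nonneg_of_mult hH hcheck.1 hcheck.2 hy hHy
  | split i l r ihl ihr =>
    rw [check, Bool.and_eq_true] at hcheck
    have hy' {a' : DyadicInterval} (ha' : y i ∈ a'.cell) (j : Fin d) :
        y j ∈ (Function.update b i a' j).cell := by
      by_cases hj : j = i
      · subst hj; simpa using ha'
      · simpa [hj] using hy j
    rcases DyadicInterval.mem_left_cell_or_mem_right_cell (hy i) with left | right
    · exact ihl (hG.leftHalf (by norm_num) i) (hH.leftHalf (by norm_num) i) hcheck.1 (hy' left)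
    · exact ihr (hG.rightHalf (by norm_num) i) (hH.rightHalf (by norm_num) i) hcheck.2 (hy' right)

end Certificates

/-! ### Bernstein coefficients by Kronecker substitution -/

section BoundedPolynomials

open MvPolynomial

variable {ι : Type*} {p q : MvPolynomial ι ℤ}

/-- The sum of the absolute values of the coefficients of `p`. -/
def coeffNorm (p : MvPolynomial ι ℤ) : ℕ := ∑ m ∈ p.support, (p.coeff m).natAbs

lemma coeffNorm_eq_sum {s : Finset (ι →₀ ℕ)} (hs : p.support ⊆ s) :
    coeffNorm p = ∑ m ∈ s, (p.coeff m).natAbs :=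
  Finset.sum_subset hs fun m _ hm => by rw [notMem_support_iff.1 hm, Int.natAbs_zero]

lemma natAbs_coeff_le_coeffNorm (p : MvPolynomial ι ℤ) (m : ι →₀ ℕ) :
    (p.coeff m).natAbs ≤ coeffNorm p := by
  classical
  rw [coeffNorm_eq_sum (Finset.subset_insert m p.support)]
  exact Finset.single_le_sum (f := fun m => (p.coeff m).natAbs) (fun _ _ => Nat.zero_le _)
    (Finset.mem_insert_self m _)

lemma coeffNorm_zero : coeffNorm (0 : MvPolynomial ι ℤ) = 0 := rfl

lemma coeffNorm_monomial_le (m : ι →₀ ℕ) (c : ℤ) : coeffNorm (monomial m c) ≤ c.natAbs := by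
  classical
  rw [coeffNorm_eq_sum support_monomial_subset, Finset.sum_singleton, coeff_monomial, if_pos rfl]

lemma coeffNorm_neg (p : MvPolynomial ι ℤ) : coeffNorm (-p) = coeffNorm p := by
  simp only [coeffNorm, support_neg, coeff_neg, Int.natAbs_neg]

lemma coeffNorm_add_le (p q : MvPolynomial ι ℤ) :
    coeffNorm (p + q) ≤ coeffNorm p + coeffNorm q := by
  classical
  rw [coeffNorm_eq_sum support_add, coeffNorm_eq_sum (Finset.subset_union_left (s₂ := q.support)),
    coeffNorm_eq_sum (Finset.subset_union_right (s₁ := p.support)), ← Finset.sum_add_distrib]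
  exact Finset.sum_le_sum fun m _ => (coeff_add m p q).symm ▸ Int.natAbs_add_le _ _

lemma coeffNorm_sum_le {κ : Type*} (s : Finset κ) (f : κ → MvPolynomial ι ℤ) :
    coeffNorm (∑ k ∈ s, f k) ≤ ∑ k ∈ s, coeffNorm (f k) :=
  Finset.le_sum_of_subadditive coeffNorm coeffNorm_zero.le coeffNorm_add_le s f

lemma coeffNorm_mul_le (p q : MvPolynomial ι ℤ) :
    coeffNorm (p * q) ≤ coeffNorm p * coeffNorm q := by
  have expand : p * q = ∑ k ∈ p.support, ∑ l ∈ q.support,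
      monomial (k + l) (p.coeff k * q.coeff l) := by
    conv_lhs => rw [p.as_sum, q.as_sum, Finset.sum_mul_sum]
    simp only [monomial_mul]
  rw [expand, coeffNorm.eq_def p, coeffNorm.eq_def q, Finset.sum_mul_sum]
  refine (coeffNorm_sum_le _ _).trans (Finset.sum_le_sum fun k _ => ?_)
  refine (coeffNorm_sum_le _ _).trans (Finset.sum_le_sum fun l _ => ?_)
  exact (coeffNorm_monomial_le _ _).trans_eq (Int.natAbs_mul _ _)

/-- `p` has degree at most `δ i` in the variable `i` and coefficient norm at most `N`. -/
structure IsBounded (δ : ι → ℕ) (N : ℕ) (p : MvPolynomial ι ℤ) : Prop where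
  degreeOf_le : ∀ i, p.degreeOf i ≤ δ i
  coeffNorm_le : coeffNorm p ≤ N

namespace IsBounded

variable {δ ε : ι → ℕ} {M N : ℕ}

lemma mono (hp : IsBounded δ N p) (hδ : δ ≤ ε) (hN : N ≤ M) : IsBounded ε M p :=
  ⟨fun i => (hp.degreeOf_le i).trans (hδ i), hp.coeffNorm_le.trans hN⟩

lemma intCast (δ : ι → ℕ) (c : ℤ) : IsBounded δ c.natAbs (c : MvPolynomial ι ℤ) :=
  ⟨fun i => by rw [← eq_intCast C, degreeOf_C]; exact Nat.zero_le _,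
    by rw [← eq_intCast C, C_apply]; exact coeffNorm_monomial_le 0 c⟩

lemma X [DecidableEq ι] (i : ι) : IsBounded (Pi.single i 1) 1 (X i : MvPolynomial ι ℤ) :=
  ⟨fun j => by simp [degreeOf_X, Pi.single_apply, eq_comm], coeffNorm_monomial_le _ 1⟩

lemma add (hp : IsBounded δ M p) (hq : IsBounded δ N q) : IsBounded δ (M + N) (p + q) :=
  ⟨fun i => (degreeOf_add_le i p q).trans (max_le (hp.degreeOf_le i) (hq.degreeOf_le i)),
    (coeffNorm_add_le p q).trans (add_le_add hp.coeffNorm_le hq.coeffNorm_le)⟩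

lemma neg (hp : IsBounded δ N p) : IsBounded δ N (-p) :=
  ⟨fun i => by rw [degreeOf_neg]; exact hp.degreeOf_le i,
    (coeffNorm_neg p).trans_le hp.coeffNorm_le⟩

lemma sub (hp : IsBounded δ M p) (hq : IsBounded δ N q) : IsBounded δ (M + N) (p - q) :=
  sub_eq_add_neg p q ▸ hp.add hq.neg

lemma mul (hp : IsBounded δ M p) (hq : IsBounded ε N q) : IsBounded (δ + ε) (M * N) (p * q) :=
  ⟨fun i => (degreeOf_mul_le i p q).trans (add_le_add (hp.degreeOf_le i) (hq.degreeOf_le i)),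
    (coeffNorm_mul_le p q).trans (Nat.mul_le_mul hp.coeffNorm_le hq.coeffNorm_le)⟩

lemma intCast_mul (c : ℤ) (hp : IsBounded δ N p) : IsBounded δ (c.natAbs * N) (c * p) := by
  simpa only [zero_add] using (intCast 0 c).mul hp

lemma pow (hp : IsBounded δ N p) (k : ℕ) : IsBounded (k • δ) (N ^ k) (p ^ k) := by
  induction k with
  | zero => simpa using intCast (0 : ι → ℕ) 1
  | succ k ih => simpa only [pow_succ, succ_nsmul] using ih.mul hp

lemma sum {κ : Type*} {s : Finset κ} {f : κ → MvPolynomial ι ℤ}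
    (hf : ∀ k ∈ s, IsBounded δ N (f k)) : IsBounded δ (s.card * N) (∑ k ∈ s, f k) :=
  ⟨fun i => (degreeOf_sum_le i s f).trans (Finset.sup_le fun k hk => (hf k hk).degreeOf_le i),
    (coeffNorm_sum_le s f).trans
      (Finset.sum_le_card_nsmul s _ N fun k hk => (hf k hk).coeffNorm_le)⟩

lemma prod {κ : Type*} {s : Finset κ} {f : κ → MvPolynomial ι ℤ} {δ : κ → ι → ℕ}
    (hf : ∀ k ∈ s, IsBounded (δ k) N (f k)) :
    IsBounded (∑ k ∈ s, δ k) (N ^ s.card) (∏ k ∈ s, f k) := by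
  classical
  induction s using Finset.induction_on with
  | empty => simpa using intCast (0 : ι → ℕ) 1
  | insert k s hk ih =>
    rw [Finset.prod_insert hk, Finset.sum_insert hk, Finset.card_insert_of_notMem hk, pow_succ']
    exact (hf k (Finset.mem_insert_self k s)).mul
      (ih fun l hl => hf l (Finset.mem_insert_of_mem hl))

end IsBounded

end BoundedPolynomials

section Kronecker

open MvPolynomial

/-- The multi-index `m` as an exponent vector. -/
noncomputable def exponent {ι : Type*} [Finite ι] {n : ℕ} (m : ι → Fin (n + 1)) : ι →₀ ℕ :=
  Finsupp.equivFunOnFinite.symm fun i => (m i : ℕ)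

lemma eval₂_eq_sum_exponent {ι R : Type*} [Fintype ι] [DecidableEq ι] [CommSemiring R] {n : ℕ}
    {p : MvPolynomial ι ℤ} (hp : ∀ i, p.degreeOf i ≤ n) (f : ℤ →+* R) (a : ι → R) :
    p.eval₂ f a =
      ∑ m : ι → Fin (n + 1), f (p.coeff (exponent m)) * ∏ i, a i ^ (m i : ℕ) := by
  have exponent_ofNat {e : ι →₀ ℕ} (he : e ∈ p.support) :
      exponent (fun i => Fin.ofNat (n + 1) (e i)) = e := by
    ext i
    exact Nat.mod_eq_of_lt (Nat.lt_succ_of_le ((le_degreeOf_of_mem_support i he).trans (hp i)))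
  rw [eval₂_eq']
  refine Finset.sum_of_injOn (fun e i => Fin.ofNat (n + 1) (e i)) (fun e he e' he' h => ?_)
    (fun _ _ => Finset.mem_coe.2 (Finset.mem_univ _)) (fun m _ hm => ?_) fun e he => ?_
  · rw [← exponent_ofNat he, ← exponent_ofNat he']
    exact congrArg exponent h
  · rw [notMem_support_iff.1 fun h => hm ⟨exponent m, h, ?_⟩, map_zero, zero_mul]
    exact funext fun i => Fin.ofNat_val_eq_self (m i)
  · simp only [exponent_ofNat he]
    congr! 3 with i
    exact (DFunLike.congr_fun (exponent_ofNat he) i).symm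

lemma digit_sum_fin {w N : ℕ} {c : Fin N → ℕ} (hc : ∀ q, c q < 2 ^ w) (q : Fin N) :
    digit w (∑ r, c r * 2 ^ (w * r)) q = c q := by
  induction N with
  | zero => exact q.elim0
  | succ N ih =>
    have split : ∑ r, c r * 2 ^ (w * r) = c 0 + 2 ^ w * ∑ r : Fin N, c r.succ * 2 ^ (w * r) := by
      rw [Fin.sum_univ_succ, Finset.mul_sum]
      simp only [Fin.val_zero, mul_zero, pow_zero, mul_one, Fin.val_succ, mul_add, pow_add]
      congr! 2
      ring
    rw [split]
    cases q using Fin.cases with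
    | zero =>
      rw [Fin.val_zero, digit_zero_right, Nat.add_mul_mod_self_left, Nat.mod_eq_of_lt (hc 0)]
    | succ q =>
      rw [Fin.val_succ, digit_succ, Nat.add_mul_div_left _ _ (by positivity),
        Nat.div_eq_of_lt (hc 0), zero_add, ih fun r => hc r.succ]

variable {n d : ℕ}

lemma digit_sum_flatIndex {w : ℕ} {c : (Fin d → Fin (n + 1)) → ℕ} (hc : ∀ m, c m < 2 ^ w)
    (m : Fin d → Fin (n + 1)) : digit w (∑ l, c l * 2 ^ (w * flatIndex l)) (flatIndex m) = c m := by
  have := digit_sum_fin (c := fun q => c (finFunctionFinEquiv.symm q)) (fun q => hc _)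
    (finFunctionFinEquiv m)
  rw [← finFunctionFinEquiv.sum_comp] at this
  simpa only [flatIndex, Equiv.symm_apply_apply] using this

/-- The value substituted for the variable `i`: the monomials of degree at most `n` in each of the
variables then become the powers of `2 ^ 256`. -/
def kroneckerBase (n i : ℕ) : ℕ := 2 ^ (256 * (n + 1) ^ i)

lemma prod_kroneckerBase_pow (m : Fin d → Fin (n + 1)) :
    ∏ i : Fin d, kroneckerBase n i ^ (m i : ℕ) = 2 ^ (256 * flatIndex m) := by
  simp only [kroneckerBase, flatIndex, finFunctionFinEquiv_apply, ← pow_mul, Finset.mul_sum,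
    Finset.prod_pow_eq_pow_sum]
  congr! 2
  ring

/-- The point of the Kronecker substitution in `d` variables. -/
def kroneckerPoint (n d : ℕ) (i : Fin d) : ℤ := kroneckerBase n i

/-- For the value `v` of a polynomial `p` at the Kronecker point, the coefficients of
`p + c ∏ (1 + X i) ^ n` packed in base `2 ^ 256` with offset `2 ^ 254`. -/
def packCoeffs (n d c : ℕ) (v : ℤ) : ℕ :=
  (v + (c * ∏ i : Fin d, (1 + kroneckerBase n i) ^ n +
    2 ^ 254 * ∏ i : Fin d, ∑ k ∈ Finset.range (n + 1), kroneckerBase n i ^ k : ℕ)).toNat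

/-- Adds the constant `c` to the polynomial in `x i = X i / (1 + X i)` with numerator `p`. -/
noncomputable def addConst (n c : ℕ) (p : MvPolynomial (Fin d) ℤ) : MvPolynomial (Fin d) ℤ :=
  p + (c : MvPolynomial (Fin d) ℤ) * ∏ i, (1 + X i) ^ n

lemma IsBounded.addConst {p : MvPolynomial (Fin d) ℤ} {N c : ℕ} (hp : IsBounded (fun _ => n) N p) :
    IsBounded (fun _ => n) (N + c * (2 ^ n) ^ d) (addConst n c p) := by
  have one_add (i : Fin d) : IsBounded (n • Pi.single i 1) (2 ^ n)
      ((1 + MvPolynomial.X i : MvPolynomial (Fin d) ℤ) ^ n) := by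
    simpa using ((intCast _ 1).add (X i)).pow n
  have prod := IsBounded.prod (s := Finset.univ) fun i _ => one_add i
  rw [← Finset.smul_sum, Finset.univ_sum_single (fun _ : Fin d => 1), Finset.card_univ,
    Fintype.card_fin] at prod
  simpa [KissingNumber.addConst] using hp.add ((prod.intCast_mul c).mono (fun i => by simp) le_rfl)

lemma prod_sum_kroneckerBase_pow (n d : ℕ) :
    ∏ i : Fin d, ∑ k ∈ Finset.range (n + 1), kroneckerBase n i ^ k =
      ∑ m : Fin d → Fin (n + 1), 2 ^ (256 * flatIndex m) := by
  simp only [Finset.sum_range, Finset.prod_univ_sum, Fintype.piFinset_univ, prod_kroneckerBase_pow]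

lemma packCoeffs_eval {p : MvPolynomial (Fin d) ℤ} {c : ℕ}
    (hdeg : ∀ i, (addConst n c p).degreeOf i ≤ n) :
    packCoeffs n d c (p.eval (kroneckerPoint n d)) = (∑ m : Fin d → Fin (n + 1),
      ((addConst n c p).coeff (exponent m) + 2 ^ 254) * 2 ^ (256 * flatIndex m)).toNat := by
  have eval_addConst : (addConst n c p).eval (kroneckerPoint n d) =
      p.eval (kroneckerPoint n d) + c * ∏ i : Fin d, (1 + kroneckerBase n i : ℤ) ^ n := by
    simp [addConst, kroneckerPoint]
  have monomial_eq (m : Fin d → Fin (n + 1)) :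
      ∏ i, kroneckerPoint n d i ^ (m i : ℕ) = 2 ^ (256 * flatIndex m) := by
    simp only [kroneckerPoint]
    exact_mod_cast prod_kroneckerBase_pow m
  rw [packCoeffs, prod_sum_kroneckerBase_pow]
  simp only [Nat.cast_add, Nat.cast_mul, Nat.cast_sum, Nat.cast_prod, Nat.cast_pow, Nat.cast_one,
    Nat.cast_ofNat]
  rw [← add_assoc, ← eval_addConst, eval, coe_eval₂Hom, eval₂_eq_sum_exponent hdeg, Finset.mul_sum,
    ← Finset.sum_add_distrib]
  simp only [monomial_eq, RingHom.id_apply, add_mul]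

lemma digit_packCoeffs {p : MvPolynomial (Fin d) ℤ} {N c : ℕ}
    (hp : IsBounded (fun _ => n) N (addConst n c p)) (hN : N < 2 ^ 254)
    (m : Fin d → Fin (n + 1)) :
    (digit 256 (packCoeffs n d c (p.eval (kroneckerPoint n d))) (flatIndex m) : ℤ) =
      (addConst n c p).coeff (exponent m) + 2 ^ 254 := by
  have coeff_lt (l : Fin d → Fin (n + 1)) :
      ((addConst n c p).coeff (exponent l)).natAbs < 2 ^ 254 :=
    ((natAbs_coeff_le_coeffNorm _ _).trans hp.coeffNorm_le).trans_lt hN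
  have toNat_eq (l : Fin d → Fin (n + 1)) :
      (((addConst n c p).coeff (exponent l) + 2 ^ 254).toNat : ℤ) =
        (addConst n c p).coeff (exponent l) + 2 ^ 254 :=
    Int.toNat_of_nonneg (by have := coeff_lt l; lia)
  have digits : packCoeffs n d c (p.eval (kroneckerPoint n d)) = ∑ l : Fin d → Fin (n + 1),
      ((addConst n c p).coeff (exponent l) + 2 ^ 254).toNat * 2 ^ (256 * flatIndex l) := by
    rw [packCoeffs_eval hp.degreeOf_le]
    refine (congrArg Int.toNat ?_).trans (Int.toNat_natCast _)
    simp only [Nat.cast_sum, Nat.cast_mul, Nat.cast_pow, Nat.cast_ofNat, toNat_eq]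
  rw [digits, digit_sum_flatIndex fun l => ?_, toNat_eq]
  have := coeff_lt l
  lia

/-- The polynomial function `F` on the cube becomes `p` after the substitution
`x i = a i / (1 + a i)` and multiplication by `∏ (1 + a i) ^ n`. -/
def IsNumerator (n : ℕ) (p : MvPolynomial (Fin d) ℤ) (F : (Fin d → ℝ) → ℝ) : Prop :=
  ∀ a : Fin d → ℝ, (∀ i, 1 + a i ≠ 0) →
    aeval a p = F (fun i => a i / (1 + a i)) * ∏ i, (1 + a i) ^ n

namespace IsNumerator

variable {p : MvPolynomial (Fin d) ℤ} {F : (Fin d → ℝ) → ℝ}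

lemma addConst (hp : IsNumerator n p F) (c : ℕ) :
    IsNumerator n (addConst n c p) fun x => F x + c := fun a ha => by
  simp [KissingNumber.addConst, hp a ha, add_mul]

lemma bernsteinEval_coeff_div_mul (hdeg : ∀ i, p.degreeOf i ≤ n) {a : Fin d → ℝ}
    (ha : ∀ i, 1 + a i ≠ 0) :
    bernsteinEval n (fun m => p.coeff (exponent m) / ∏ i, (n.choose (m i) : ℝ))
      (fun i => a i / (1 + a i)) * ∏ i, (1 + a i) ^ n = aeval a p := by
  rw [aeval_def, eval₂_eq_sum_exponent hdeg, bernsteinEval, Finset.sum_mul]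
  refine Finset.sum_congr rfl fun m _ => ?_
  have factor (i : Fin d) : (bernsteinPolynomial ℝ n (m i)).eval (a i / (1 + a i)) =
      n.choose (m i) * (a i ^ (m i : ℕ) / (1 + a i) ^ n) := by
    have hm : (1 + a i) ^ n = (1 + a i) ^ (m i : ℕ) * (1 + a i) ^ (n - m i) := by
      rw [← pow_add, Nat.add_sub_cancel' (Nat.le_of_lt_succ (m i).2)]
    rw [eval_bernsteinPolynomial, one_sub_div (ha i), add_sub_cancel_right, div_pow, div_pow,
      one_pow, hm, mul_assoc, div_mul_div_comm, mul_one]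
  have choose_ne : ∏ i, (n.choose (m i) : ℝ) ≠ 0 := Finset.prod_ne_zero_iff.2 fun i _ =>
    Nat.cast_ne_zero.2 (Nat.choose_pos (Nat.le_of_lt_succ (m i).2)).ne'
  have denom_ne : ∏ i, (1 + a i) ^ n ≠ 0 :=
    Finset.prod_ne_zero_iff.2 fun i _ => pow_ne_zero n (ha i)
  simp only [factor, Finset.prod_mul_distrib, Finset.prod_div_distrib, eq_intCast]
  field_simp

lemma bernsteinEval_coeff_div (hp : IsNumerator n p F) (hdeg : ∀ i, p.degreeOf i ≤ n)
    (hF : Continuous F) :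
    bernsteinEval n (fun m => p.coeff (exponent m) / ∏ i, (n.choose (m i) : ℝ)) = F := by
  have dense : Dense (Set.pi Set.univ fun _ : Fin d => ({1}ᶜ : Set ℝ)) :=
    dense_pi _ fun _ _ => dense_compl_singleton 1
  refine Continuous.ext_on dense (by unfold bernsteinEval; fun_prop) hF fun x hx => ?_
  have hx' (i : Fin d) : 1 - x i ≠ 0 := sub_ne_zero.2 (Ne.symm (hx i (Set.mem_univ i)))
  have one_add (i : Fin d) : 1 + x i / (1 - x i) = (1 - x i)⁻¹ := by
    have := hx' i
    field_simp
    ring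
  have ha (i : Fin d) : 1 + x i / (1 - x i) ≠ 0 := one_add i ▸ inv_ne_zero (hx' i)
  have eq := (bernsteinEval_coeff_div_mul hdeg ha).trans (hp _ ha)
  have subst_inv : (fun i => x i / (1 - x i) / (1 + x i / (1 - x i))) = x := funext fun i => by
    rw [one_add, div_inv_eq_mul, div_mul_cancel₀ _ (hx' i)]
  rw [subst_inv] at eq
  exact mul_right_cancel₀ (Finset.prod_ne_zero_iff.2 fun i _ => pow_ne_zero n (ha i)) eq

end IsNumerator

/-- The product of the binomial coefficients `n.choose (m i)` for the multi-index `m` at `q`. -/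
def binomProd (n d q : ℕ) : ℕ := ∏ i : Fin d, n.choose (coord n i q)

/-- Divides the coefficients in `y` by `s` and by the binomials and repacks them in base `2 ^ 64`,
rounding down and keeping `b` bits. -/
def packBernstein (n d b s y : ℕ) : ℕ :=
  mapDigits 256 64 (fun q c => (c - 2 ^ 254) / (s * binomProd n d q) % 2 ^ b) (indexBits n d) 0 y

lemma digit_packBernstein_lt {b : ℕ} (hb : b ≤ 64) (s y q : ℕ) :
    digit 64 (packBernstein n d b s y) q < 2 ^ b := by
  have lt (q c : ℕ) : (c - 2 ^ 254) / (s * binomProd n d q) % 2 ^ b < 2 ^ b :=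
    Nat.mod_lt _ (by positivity)
  have lt' (q c : ℕ) := (lt q c).trans_le (Nat.pow_le_pow_right two_pos hb)
  rw [packBernstein]
  rcases lt_or_ge q (2 ^ indexBits n d) with inside | outside
  · exact (digit_mapDigits lt' inside _ _).trans_lt (lt _ _)
  · exact (digit_eq_zero_of_lt (mapDigits_lt lt' _ _ _) outside).trans_lt (by positivity)

lemma unpack_packBernstein_le {b : ℕ} (hb : b ≤ 64) (s y : ℕ) (m : Fin d → Fin (n + 1)) :
    unpack n d (packBernstein n d b s y) m ≤
      ((digit 256 y (flatIndex m) - 2 ^ 254 : ℕ) : ℝ) / (s * ∏ i, (n.choose (m i) : ℝ)) := by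
  have binom_eq : binomProd n d (flatIndex m) = ∏ i, n.choose (m i) := by
    simp only [binomProd, coord_flatIndex]
  rw [unpack, packBernstein, digit_mapDigits (fun q c => ?_)
    (lt_two_pow_indexBits (flatIndex_lt m)), zero_add, binom_eq]
  · exact_mod_cast (Nat.cast_le.2 (Nat.mod_le _ _)).trans Nat.cast_div_le
  · exact (Nat.mod_lt _ (by positivity)).trans_le (Nat.pow_le_pow_right two_pos hb)

/-- Tests that the coefficients in `y`, which are offset by `2 ^ 254`, are nonnegative. -/
def nonnegCoeffs (n d y : ℕ) : Bool :=
  y &&& constDigits 256 n d (2 ^ 254) == constDigits 256 n d (2 ^ 254)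

/-- `p` is a numerator of `s F`, with coefficients small enough to be read off from the value at the
Kronecker point. -/
structure Represents (n s : ℕ) (p : MvPolynomial (Fin d) ℤ) (F : (Fin d → ℝ) → ℝ) : Prop where
  pos : 0 < s
  continuous : Continuous F
  isNumerator : IsNumerator n p fun x => s * F x
  isBounded : IsBounded (fun _ => n) (2 ^ 253) p

theorem Represents.boundsBelow {s b : ℕ} {p : MvPolynomial (Fin d) ℤ} {F : (Fin d → ℝ) → ℝ}
    (hp : Represents n s p F) (hb : b < 64) (hsb : 2 ^ b * s * (2 ^ n) ^ d < 2 ^ 253)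
    (nonneg : nonnegCoeffs n d (packCoeffs n d (2 ^ b * s) (p.eval (kroneckerPoint n d)))) :
    BoundsBelow n b (fun _ => ⟨0, 0⟩)
      (packBernstein n d (b + 1) s (packCoeffs n d (2 ^ b * s) (p.eval (kroneckerPoint n d))))
      F := by
  refine ⟨digit_packBernstein_lt hb s _, fun y hy => ?_⟩
  have y_mem (i : Fin d) : y i ∈ Set.Icc (0 : ℝ) 1 := by
    simpa [DyadicInterval.rescale] using (hy i).1
  have bounded := hp.isBounded.addConst (c := 2 ^ b * s)
  have numerator := (hp.isNumerator.addConst (2 ^ b * s)).bernsteinEval_coeff_div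
    bounded.degreeOf_le (by have := hp.continuous; fun_prop)
  have pos : (0 : ℝ) < s := Nat.cast_pos.2 hp.pos
  have coeff_le (m : Fin d → Fin (n + 1)) : s * unpack n d (packBernstein n d (b + 1) s
      (packCoeffs n d (2 ^ b * s) (p.eval (kroneckerPoint n d)))) m ≤
      (addConst n (2 ^ b * s) p).coeff (exponent m) / ∏ i, (n.choose (m i) : ℝ) := by
    refine (mul_le_mul_of_nonneg_left (unpack_packBernstein_le hb s _ m) pos.le).trans_eq ?_
    have digit_eq := digit_packCoeffs bounded (by lia) m
    have large := two_pow_le_of_and_eq (by norm_num) (flatIndex_lt m) (eq_of_beq nonneg)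
    have coeff_eq : (digit 256 (packCoeffs n d (2 ^ b * s) (p.eval (kroneckerPoint n d)))
        (flatIndex m) - 2 ^ 254 : ℕ) = (addConst n (2 ^ b * s) p).coeff (exponent m) := by
      push_cast [large]
      lia
    rw [← mul_div_assoc, mul_div_mul_left _ _ pos.ne', ← coeff_eq, Int.cast_natCast]
  have eval_le := bernsteinEval_le_bernsteinEval y_mem coeff_le
  rw [bernsteinEval_const_mul, numerator] at eval_le
  refine le_of_mul_le_mul_left ?_ pos
  simp only [DyadicInterval.rescale, pow_zero, mul_one, Nat.cast_zero, sub_zero, Nat.cast_mul,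
    Nat.cast_pow, Nat.cast_ofNat] at eval_le ⊢
  linarith

/-- Verifies a certificate on the whole cube, for functions `G` and `H` given by the values `g` and
`h` of numerators of `s G` and `H` at the Kronecker point. -/
def Certificate.verify (t : Certificate d) (n s : ℕ) (g h : ℤ) : Bool :=
  nonnegCoeffs n d (packCoeffs n d (2 ^ 62 * s) g) &&
  nonnegCoeffs n d (packCoeffs n d (2 ^ 33 * 1) h) &&
  t.check n (packBernstein n d 63 s (packCoeffs n d (2 ^ 62 * s) g))
    (packBernstein n d 34 1 (packCoeffs n d (2 ^ 33 * 1) h)) fun _ => ⟨0, 0⟩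

theorem Certificate.nonneg_of_verify {t : Certificate d} {s : ℕ} {g h : MvPolynomial (Fin d) ℤ}
    {G H : (Fin d → ℝ) → ℝ} (hg : Represents n s g G) (hh : Represents n 1 h H)
    (hs : 2 ^ 62 * s * (2 ^ n) ^ d < 2 ^ 253)
    (hverify : t.verify n s (g.eval (kroneckerPoint n d)) (h.eval (kroneckerPoint n d)))
    {y : Fin d → ℝ} (hy : ∀ i, y i ∈ Set.Icc (0 : ℝ) 1) (mono : Monotone y) (hHy : H y ≤ 0) :
    0 ≤ G y := by
  rw [verify, Bool.and_eq_true, Bool.and_eq_true] at hverify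
  obtain ⟨⟨nonneg_g, nonneg_h⟩, hcheck⟩ := hverify
  have hs' : 2 ^ 33 * 1 * (2 ^ n) ^ d < 2 ^ 253 :=
    (Nat.mul_le_mul_right _ (Nat.mul_le_mul (by norm_num) hg.pos)).trans_lt hs
  exact t.nonneg_of_check (hg.boundsBelow (by norm_num) hs nonneg_g)
    (hh.boundsBelow (by norm_num) hs' nonneg_h) hcheck
    (fun i => ⟨by simpa [DyadicInterval.rescale] using hy i, .inl rfl⟩) mono hHy

end Kronecker

/-! ### The two-point and three-point functions in dimension twelve -/

section Functions

/-- `∑ⱼ fⱼ xʲ zⁿ⁻ʲ` for a list `f` of length `n + 1`. -/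
def homogEval {R : Type*} [CommRing R] (x z : R) : List ℤ → R
  | [] => 0
  | c :: f => c * z ^ f.length + x * homogEval x z f

/-- Coefficients of the Gegenbauer polynomials of degree `k < 8` in dimension twelve. -/
def sphereCoeff (k j : ℕ) : ℤ :=
  (([[1], [1], [12, -1], [14, -3], [224, -84, 3], [288, -160, 15], [384, -288, 48, -1],
    [528, -504, 126, -7]] : List (List ℤ)).getD k []).getD j 0

/-- Coefficients of the Gegenbauer polynomials of degree `k < 7` in dimension eleven. -/
def poleCoeff (k j : ℕ) : ℤ :=
  (([[1], [1], [11, -1], [13, -3], [65, -26, 1], [17, -10, 1], [323, -255, 45, -1]] :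
    List (List ℤ)).getD k []).getD j 0

/-- The weights of the Gegenbauer polynomials in the two-point function. Like `factorTable`, they
are a rounded numerical solution of the semidefinite program of Bachoc and Vallentin. -/
def sphereWeight (k : ℕ) : ℕ :=
  [0, 1218998, 418, 2354468, 143380, 409220, 20722, 10486].getD k 0

/-- The rows of a factor of each positive semidefinite matrix of the three-point function, in the
basis `xʲ zⁿ⁻ʲ` of `homogEval`. -/
def factorTable : List (List (List ℤ)) :=
  [[[27766294, 298363098, 498671741, -23070399390, 131355509711, -409968074152, 824998420966,
     -1164164511761, 1175456887205, -818631378700, 376718535977, -105688401707, 15681873631,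
     -1143318893, 144209442, -10567350, -258811],
    [-1272174, -125197302, 3937602307, -32178443735, 151316516961, -424708393556,
     754724329347, -987674588288, 1030452952974, -855086611158, 511458029509, -196823026200,
     43558664966, -5268982487, 270871638, 954999, 487571],
    [7489338, -674191125, 10085556950, -59920127466, 125417604831, 125229259018,
     -1041001299661, 2104676338589, -2238766079226, 1412735713940, -565564043929,
     145122495050, -24684444153, 2844242700, -169865878, 3829659, 141632],
    [-8569831, 1137055493, -22590797282, 171879132609, -668366265638, 1372632920246,
     -1158820695784, -782975232861, 2942282947464, -3163305492768, 1818144040942,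
     -613927114434, 120998328874, -12983736215, 579626117, -8644992, 149988],
    [1196696, -29072842, -3242103141, 67601637198, -525676194987, 2129368787968,
     -5056789966033, 7541733956605, -7306573147504, 4690052576777, -2010075099056,
     569224280266, -103327583791, 10869890119, -556071627, 6915004, 79159],
    [-2223970, 405059428, -11215940891, 116023274823, -599470092475, 1762753086360,
     -3143693519981, 3463060864453, -2321579181910, 901169740389, -175161555914, 14151731057,
     -3909236394, 1550637344, -205995317, 7666538, -26958],
    [1472144, -230694061, 5175614952, -44077161278, 199273282868, -482275937371, 468678770950,
     341580235308, -1439077654687, 1694425113362, -1048994705724, 377798940748, -78616448718,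
     8690020739, -437236730, 6208891, 9805],
    [-386250, 68718809, -1604621320, 11200168816, -23012840054, -58398844068, 421408249510,
     -1018339400047, 1349939670587, -1079487459684, 526813108618, -151904121062, 23305913190,
     -1240000242, -56489013, 4321336, -20685],
    [-23790, 26398572, -1779318484, 33601154166, -269257662843, 1125491548485, -2770009966475,
     4295392894181, -4342542041416, 2911196929202, -1297820118083, 378778836258, -69526103875,
     7284900565, -345712511, 4178235, 4488],
    [-524068, 141338156, -5523052617, 75870919233, -498147623327, 1836991683977,
     -4170152252696, 6129051475642, -5992202594284, 3937798775990, -1725819414030,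
     489761705541, -84129307825, 7496160626, -233208241, -1165797, 29057],
    [231407, -69205649, 2961588357, -43354457876, 289770904333, -1020568173557, 2040833927816,
     -2366874271556, 1513740175993, -399528384960, -83297575472, 86218495346, -22166249075,
     2246599308, -63804568, -743279, 10103],
    [-49234, 16363534, -787978753, 13195391534, -103225646135, 440051322687, -1121697781651,
     1806269395042, -1888771077391, 1293038733816, -575033951582, 161221919648, -26666461954,
     2302244162, -83063699, 747452, 376],
    [11956, -4397126, 232798037, -4220591791, 34747761830, -149056467990, 358608026598,
     -498666264772, 391615159932, -147621894910, -560699567, 21233823135, -7251251866,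
     991832249, -55539545, 1005914, -2523],
    [-3786, 1472913, -82234054, 1563006340, -13365795371, 58817678408, -143381745851,
     201656715160, -166566203982, 80272774315, -21317237396, 2367553082, 164986304, -68479959,
     5601680, -133488, 428],
    [2116, -926976, 59331476, -1322016452, 13628809891, -74865828312, 237798272821,
     -459066600356, 554357981611, -423673808677, 203895703950, -60336155939, 10470185462,
     -981856898, 43133402, -666317, 1515],
    [-884, 413469, -28172273, 664474659, -7184914741, 40830686787, -131578637739,
     251071160742, -289957558878, 203764225734, -86263573678, 21409945047, -2963014362,
     209808464, -6521502, 65066, -81],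
    [254, -125765, 9117978, -229773053, 2667008648, -16357653039, 57251785635, -119536695282,
     152409286485, -119536695282, 57251785635, -16357653039, 2667008648, -229773053, 9117978,
     -125765, 254]],
   [[105376622, -3936416752, 64614736935, -429003335856, 1511314816531, -3017553473376,
     3331816857480, -1640078534656, -328199948854, 853914737793, -459955582188, 122303315348,
     -17176123386, 1065339306, 1973767, 264659],
    [-62739009, 3590223829, -33627604548, 175848396808, -533545963910, 898354628745,
     -692762194808, -154278088492, 826513890234, -742596324747, 331894945094, -81563360597,
     10622239298, -747092408, 31332331, 474037],
    [30347697, -1982949002, 25671143798, -185513678172, 710142920689, -1594575597934,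
     2235172276303, -2088086110748, 1398147759558, -691865205358, 243388520876, -54422712700,
     6194923654, -366129852, 36349878, 582893],
    [-13893492, 1118829484, -14250785405, 93501892957, -355126207264, 724648938214,
     -825380732245, 457974582360, -17071518779, -115311444563, 59592441506, -13811606372,
     1026369084, -196844074, 10177777, 462990],
    [1957012, 47563667, -4800097937, 47436100231, -231310224596, 734015911404, -1498816721442,
     2035022782242, -1745778864321, 916789760921, -281499915368, 44617628169, -2900546545,
     -190603273, 3877382, 454931],
    [-5601459, 792174796, -17565806755, 156844382633, -734830233008, 1976347577986,
     -3244166321148, 3359077817365, -2261217194671, 1033399717886, -321698202128, 69284632958,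
     -8690261422, 287592086, -513912, 156023],
    [314215, 45019716, -3164594714, 38299066953, -183318034435, 502135703172, -900637078491,
     1052094252512, -801736057890, 360491145306, -66597040815, -9114276729, 6435200854,
     -859887672, 21958539, 40412],
    [-3184100, 464084234, -7088341831, 1721250022, 310271185293, -1554778412448,
     3485338720511, -4339220043101, 3181028911139, -1416840614728, 392795655838, -70334354081,
     8949922105, -681951603, 14492069, 13511],
    [807480, -134778106, 2640079723, -10383188207, -31335789395, 263459247498, -604957201482,
     616965369173, -193115263856, -148047528691, 159367325607, -62342670598, 11259150371,
     -765061583, 10298903, 33272],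
    [-1137528, 287837135, -10370095869, 128405503161, -742129302029, 2367419305332,
     -4615833800835, 5813503990505, -4844544245636, 2682540925081, -969323505494,
     218002664369, -28197976192, 1837072037, -45459030, 176018],
    [347082, -95367105, 3763670739, -51508818329, 330985626682, -1170514864168, 2487058774839,
     -3302656576626, 2765791014387, -1445690252112, 453774521817, -77186182143, 5399556731,
     13808278, -9115043, 60205],
    [-352786, 108246932, -4708723978, 69014234257, -452186798932, 1525160794587,
     -2877644628450, 3196402233034, -2146761062895, 878567731012, -221688353133, 36921169821,
     -4453822621, 333850595, -9678077, 40268],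
    [51918, -16943233, 780675279, -11999693141, 80764308831, -268522806806, 458902036024,
     -375942298811, 66496579053, 120809053234, -99014274995, 32529161209, -5048339316,
     341116657, -7704647, 24615],
    [-28927, 10857033, -588678997, 10980672942, -93620517545, 420278224379, -1078683988293,
     1664303054345, -1586288324097, 939481234322, -339687156290, 71641135339, -8113797002,
     426957790, -7823302, 20880],
    [7141, -3010283, 183598805, -3846911493, 36627653263, -181390185278, 503092412977,
     -813759854553, 781661036738, -445818051778, 148231344584, -27584333074, 2667347990,
     -117059325, 1762068, -3830],
    [-5102, 2219207, -139810029, 3029217291, -29859427580, 153278394909, -441255985344,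
     741891931402, -741891931402, 441255985344, -153278394909, 29859427580, -3029217291,
     139810029, -2219207, 5102]],
   [[133437555, -3947266101, 44603249991, -250322125958, 794743103341, -1519927154191,
     1799417500110, -1324238230706, 599668973852, -161619834432, 22845315600, -957310737,
     -114597114, -6548780, 12745],
    [-14264982, 133727084, 4887514483, -28361184350, 81497681963, -129091969090, 119431119005,
     -69038224628, 34063781971, -17274842432, 5730164125, -914138886, 47291411, 4863377,
     475632],
    [25314895, -1686543705, 18945177927, -103548456783, 294725093179, -456203252788,
     396675771541, -174203144454, 25181999095, 425896473, 2917946918, -1850435194, 229441521,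
     8133097, 395244],
    [-6411814, 422814720, -3372502492, 10062707230, -7728601171, -51946499751, 170243587131,
     -259372670981, 227236462548, -117966624053, 35291190598, -5836566548, 337431229, 1547039,
     98338],
    [3417161, -375190102, 6595356258, -48800896607, 190529294456, -415777613301, 521128547622,
     -355430247964, 107167548215, 9212778194, -14698334883, 2962330114, -228693068, 4064856,
     102455],
    [-3938119, 463368240, -7606654916, 45732415248, -138078278947, 214597162038,
     -148737360185, -12744962668, 102575474778, -71887592458, 22314126411, -2796732999,
     34057347, -1135787, 149759],
    [2181377, -248272218, 2392139626, 13243938242, -186596431972, 708935632188,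
     -1354436346352, 1470565978582, -940308298318, 354753622363, -74687026668, 7766751122,
     -312747103, -135587, 66397],
    [-872465, 129760451, -2449018441, 14027607395, -38268839200, 95092183683, -242963774265,
     419932066659, -421056714827, 238689351261, -75855179395, 12778014998, -940244476,
     18836517, -10603],
    [288341, -54538377, 1396137335, -11680264782, 44783525279, -100777959235, 155496857723,
     -160344612588, 96172790697, -26967555553, 1255651262, 596232626, -50128280, -692915,
     19736],
    [-164002, 34986394, -1053142154, 11159791495, -59768419902, 196505205141, -414964953101,
     543835856002, -427744350018, 196487403769, -49929253085, 6226811423, -295841605, 2371090,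
     13723],
    [182728, -48782555, 1828803810, -22844909513, 125861454568, -350830604923, 534420639582,
     -464153407061, 233743038145, -68399551393, 11892110472, -1341210332, 98547642, -3156012,
     15297],
    [-26041, 6538230, -219372495, 2228958101, -7856139953, 2252642267, 46471722383,
     -118190347107, 135687193471, -84588541281, 28839988333, -5024156330, 388873277,
     -10064328, 36610],
    [10329, -2999436, 119529865, -1521226984, 7879333235, -17447342710, 12811541002,
     7624294023, -15333779264, 6834894383, -747250996, -127031553, 24815502, -901149, 3853],
    [3210, -1337401, 79154568, -1579944843, 14053426423, -63638633304, 157498610937,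
     -220841273690, 177443987493, -80846409156, 20166715212, -2567951112, 146274560, -2824367,
     7800],
    [2050, -774866, 41971884, -772282658, 6371331931, -26901179263, 62361824655, -82235373171,
     62361824655, -26901179263, 6371331931, -772282658, 41971884, -774866, 2050]],
   [[336075970, -7763923249, 69043785924, -308821788813, 768453489449, -1114692447833,
     963795884024, -491432474787, 143073692058, -22328714103, 2206505728, -266226778, 4991506,
     -2900],
    [-4537879, 315440375, -4681854581, 26941920062, -82376269488, 131194174912, -108058546817,
     35337137252, 10655157454, -10985333470, 3148889066, -368913771, 29279399, 1001546],
    [29059250, -1700416428, 18151420195, -98684353928, 273039703768, -424427744686,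
     385785809919, -200014247018, 52160309504, -3765710129, -1091857368, 131854266, 10718871,
     1035519],
    [-16543994, 1336577847, -15614896852, 76065095715, -212004307071, 351824907106,
     -352846948748, 208823651604, -75248552282, 16750759588, -1783172120, -59859056, 1333542,
     471727],
    [6924935, -711149894, 10144739334, -54083786608, 156705727516, -275670146300,
     309589615020, -230142926422, 111250857079, -33757243139, 5870393523, -515773665,
     16288700, -23975],
    [-4490503, 457902127, -5900621703, 23972058633, -39685135745, 4140943339, 77908191400,
     -110645089946, 75018518495, -26753691521, 5076752917, -517598095, 12702451, 110909],
    [2198485, -225159321, 2288146261, -393035059, -38601304704, 126881207943, -199395962082,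
     165236391622, -68273173438, 12052079356, 15482995, -114758965, -6228244, 206474],
    [-415720, 49719963, -673909897, 1571547239, 9283984610, -64633777073, 170329531948,
     -225691746630, 161048696747, -63089320597, 12366745094, -932241227, 13058082, 70879],
    [858257, -182484670, 5485103570, -55735705609, 255058326767, -603885779728, 793910642132,
     -595818586640, 252736274254, -56744761321, 5500614734, -63892195, -10416799, 99617],
    [-167664, 36137433, -1068679535, 10227162668, -41430010384, 79245293603, -71404407641,
     22645658272, 6350669298, -5571958139, 1030811864, -44961339, -777731, 13904],
    [232920, -56998572, 1929006740, -21287844399, 100408748952, -228644206923, 264411237100,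
     -153195426080, 37659936200, 542543108, -1808923378, 251865033, -9335799, 44900],
    [-41168, 10930629, -404779021, 4949186607, -26396610361, 70508995976, -102666122805,
     86582890778, -43971663132, 13388113869, -2265328384, 180709225, -4977084, 19519],
    [-878, 747607, -55661214, 1184760593, -10262296939, 42449499797, -90922163640,
     104663418557, -65122570411, 21376547240, -3477805918, 247102846, -5834220, 19374],
    [-2068, 672256, -30923756, 476225835, -3231532452, 10987210336, -19976746065, 19976746065,
     -10987210336, 3231532452, -476225835, 30923756, -672256, 2068]],
   [[253590984, -4725252514, 34824084440, -130070803242, 267461954042, -316497726530,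
     217967314123, -84438955269, 16613565250, -1082710046, -1677154, -6387268, -312775],
    [-8431207, 355999030, -2236551453, 6878537761, -17131058081, 31282065080, -30092925303,
     15148314612, -4642457279, 943940017, -135082982, 8505041, 715245],
    [15566449, -1034211045, 11242820649, -53666013356, 136065903866, -195483688073,
     162544848908, -79105217146, 22115581647, -3377917352, 159668761, 10607966, 236768],
    [-6081496, 518147567, -6739170709, 36168803926, -103328548947, 163927492940,
     -146092654750, 70146395175, -16310315667, 1130546466, 97101457, -7057291, 65135],
    [1612155, -92556294, 156243525, 5184144704, -29096122659, 68890964664, -84329202079,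
     57383517351, -21570288713, 4079404509, -336362254, 3420348, 163480],
    [-1376398, 190920671, -3826023393, 27130371516, -92029329750, 171882399832, -187937301051,
     121207178108, -44690179669, 8752527532, -758190592, 17749090, 4465],
    [290391, -37300407, 660038945, -4021578288, 11558400942, -17072827424, 11922111649,
     -2222932920, -1638073468, 911091542, -133618138, 4451814, -6160],
    [-490809, 75289921, -1552267326, 10440328028, -32067250675, 55744621270, -61057941164,
     41844333560, -16983916536, 3742219823, -376034796, 12185659, -49195],
    [52804, -7924369, 150911634, -850729639, 1989342039, -3109357191, 4828257509, -5336859885,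
     3236822099, -999578497, 138049903, -6315823, 39481],
    [-34760, 7453528, -220241514, 2120831131, -8774297887, 17807665188, -19035215981,
     11066024499, -3473274302, 553651357, -38770426, 872634, -2486],
    [14331, -3446068, 115636854, -1281494832, 6179103655, -14756457284, 18627083714,
     -12737496965, 4664883416, -865826531, 71882296, -2025465, 8154],
    [-659, 90250, 54613, -45395607, 492329160, -1964276681, 3606461812, -3267074519,
     1469427540, -313618691, 28288621, -826438, 3326],
    [2490, -687344, 26462737, -335194672, 1831599456, -4884265215, 6734365675, -4884265215,
     1831599456, -335194672, 26462737, -687344, 2490]],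
   [[511985460, -7290126948, 41161542957, -116167265993, 178817473750, -155352750743,
     75304723211, -17061927032, 719930244, 301659780, -5971366, -430376],
    [-30692804, 1122401536, -4903282428, 6669477182, 1513284216, -13507632640, 20153903151,
     -12458961069, 3476672898, -357504183, 26763577, -364483],
    [45362603, -2692718948, 25282741894, -103261594394, 222682077422, -269084954547,
     183496207603, -69613417248, 14210524163, -1397832792, 56416779, 702104],
    [-11995129, 982601232, -11675520688, 51778149653, -114522494315, 140716982901,
     -100188421493, 39743771473, -7988599025, 658528350, -18588506, 302759],
    [1609722, -144418759, 2255278140, -15127593015, 49154777958, -80869384015, 71726123710,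
     -34706322451, 8843488395, -1018154735, 28007143, 150514],
    [-5608021, 573029758, -7509616244, 29941327459, -46396295747, 24362917994, 7792691962,
     -12856711395, 4961489079, -709910700, 21140580, 105533],
    [874854, -109181057, 1799220455, -9373631317, 20756991394, -22532533183, 12646934297,
     -3708236711, 541029533, -13737570, -3412928, 63242],
    [-157642, 21334304, -383472084, 2220388808, -5765614606, 8182107178, -6977860059,
     3631575290, -1120192180, 176816259, -9931219, 77384],
    [35503, -5073191, 86093368, -321395834, -333176268, 3166547659, -5092583372, 3388106328,
     -1020340336, 129712225, -5401992, 31252],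
    [-30700, 6178552, -171021010, 1536882274, -5884612171, 10859298688, -10197561937,
     4902914792, -1155111071, 118621041, -4051034, 19444],
    [5054, -910293, 20678517, -127817229, 191629628, 332713936, -1052945563, 876845863,
     -287701017, 36353399, -1405289, 7197],
    [-1887, 435922, -13804184, 140802673, -603440026, 1220289830, -1220289830, 603440026,
     -140802673, 13804184, -435922, 1887]],
   [[44603075, -597131606, 2530317847, -5994853979, 9070840571, -8791378327, 5014675986,
     -1592800525, 252608849, -6914584, 426865],
    [-4902053, 255616777, -2285882693, 8474792801, -15878479140, 16051190521, -8744126253,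
     2473595434, -317508073, 14750479, 110608],
    [3596060, -154995872, 1034127253, -3536070923, 6718547504, -7169967830, 4146651552,
     -1269834563, 187569714, -7454066, 152450],
    [-140314, 8490622, -74911537, 276937744, -547752085, 605152399, -391959468, 140688956,
     -25853239, 1609857, -7202],
    [124523, -9494122, 93073833, -296131846, 405559434, -200894787, -49069379, 82488983,
     -26173232, 2180234, -19795],
    [-69593, 6662880, -85583484, 370965783, -756912335, 820766237, -477534430, 140986239,
     -16671508, 331825, 4605],
    [30739, -3147180, 40996290, -166601454, 306724479, -318916252, 191579493, -64413286,
     12045472, -916719, 10003],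
    [-9530, 1316124, -24277725, 141581824, -343142789, 387227759, -206561840, 47558162,
     -3531461, 3192, 1038],
    [1805, -274706, 5525414, -34467388, 87204799, -101519911, 58058977, -16531497, 2162434,
     -98864, 649],
    [-461, 79348, -1811293, 12793677, -36065280, 44808292, -25036937, 6007005, -538792, 12812,
     -24],
    [496, -94200, 2402100, -19216803, 62454611, -91600096, 62454611, -19216803, 2402100,
     -94200, 496]]]

/-- The `r`-th row of the factor for Gegenbauer degree `k`. -/
def factor (k r : ℕ) : List ℤ := (factorTable.getD k []).getD r []

/-- The two-point function divided by `2 ^ 24`, homogenised to degree seven. -/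
def sphereForm {R : Type*} [CommRing R] (s z : R) : R :=
  ∑ k ∈ Finset.range 8,
    sphereWeight k * (zonalKernel k (fun j => (sphereCoeff k j : R)) s (z ^ 2) * z ^ (7 - k))

/-- The two-point function; the factor matches the scale of `poleKernel`. -/
noncomputable def sphereKernel (t : ℝ) : ℝ := 2 ^ 24 * sphereForm t 1

/-- `factor k r` as a polynomial of `u`, in the coordinate `2 (1 + u) / 3` that maps `[-1, 1/2]`
to `[0, 1]`. -/
noncomputable def factorEval (k r : ℕ) (u : ℝ) : ℝ :=
  homogEval (2 * (1 + u) / 3) ((1 - 2 * u) / 3) (factor k r)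

/-- The three-point function. -/
noncomputable def poleKernel (u v t : ℝ) : ℝ :=
  ∑ k ∈ Finset.range 7, ∑ r ∈ Finset.range (17 - k), factorEval k r u * factorEval k r v *
    zonalKernel k (fun j => (poleCoeff k j : ℝ)) (t - u * v) ((1 - u ^ 2) * (1 - v ^ 2))

/-- The numerator of `4 ^ 6 * poleKernel` in the coordinates `a = x / (1 - x)`, where
`x = 2 (1 + u) / 3`, and similarly `b`, `c` for `v`, `t`. -/
def poleForm {R : Type*} [CommRing R] (a b c : R) : R :=
  ∑ k ∈ Finset.range 7, 4 ^ (6 - k) *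
    zonalKernel k (fun j => (poleCoeff k j : R))
      (2 * (c - 2) * (1 + a) * (1 + b) - (a - 2) * (b - 2) * (1 + c))
      ((12 * a + 3 * a ^ 2) * (12 * b + 3 * b ^ 2) * (1 + c) ^ 2) *
    (∑ r ∈ Finset.range (17 - k), homogEval a 1 (factor k r) * homogEval b 1 (factor k r)) *
    (1 + c) ^ (16 - k)

lemma isGegenbauerCoeff_sphereCoeff {k : ℕ} (hk : k < 8) :
    IsGegenbauerCoeff 12 k fun j => (sphereCoeff k j : ℝ) := by
  refine ⟨?_, fun j hj => ?_⟩
  · interval_cases k <;> norm_num [sphereCoeff]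
  · have : j ≤ 2 := by omega
    interval_cases k <;> interval_cases j <;> first | omega | norm_num [sphereCoeff]

lemma isGegenbauerCoeff_poleCoeff {k : ℕ} (hk : k < 7) :
    IsGegenbauerCoeff 11 k fun j => (poleCoeff k j : ℝ) := by
  refine ⟨?_, fun j hj => ?_⟩
  · interval_cases k <;> norm_num [poleCoeff]
  · have : j ≤ 2 := by omega
    interval_cases k <;> interval_cases j <;> first | omega | norm_num [poleCoeff]

section Membership

variable {E : Type*} [NormedAddCommGroup E] [InnerProductSpace ℝ E] [FiniteDimensional ℝ E]

lemma sphereKernel_mem_positiveOnSphere (hE : Module.finrank ℝ E = 12) :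
    sphereKernel ∈ positiveOnSphere E := by
  have term {k : ℕ} (hk : k ∈ Finset.range 8) := nsmul_mem
    (zonalKernel_mem_positiveOnSphere (E := E)
      (hE ▸ isGegenbauerCoeff_sphereCoeff (Finset.mem_range.1 hk))) (2 ^ 24 * sphereWeight k)
  convert sum_mem fun k hk => term hk using 1
  ext t
  norm_num [sphereKernel, sphereForm, Finset.sum_apply, Finset.mul_sum, mul_assoc]

lemma poleKernel_mem_positiveAtPole (hE : Module.finrank ℝ E = 12) :
    poleKernel ∈ positiveAtPole E := by
  have term {k : ℕ} (hk : k ∈ Finset.range 7) (r : ℕ) := zonalKernel_mem_positiveAtPole (E := E)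
    hE (isGegenbauerCoeff_poleCoeff (Finset.mem_range.1 hk)) (factorEval k r)
  convert sum_mem fun k hk => sum_mem fun r (_ : r ∈ Finset.range (17 - k)) => term hk r using 1
  ext u v t
  simp [poleKernel, Finset.sum_apply]

end Membership

lemma poleKernel_comm (u v t : ℝ) : poleKernel u v t = poleKernel v u t := by
  simp only [poleKernel, mul_comm u v, mul_comm (factorEval _ _ u), mul_comm (1 - u ^ 2)]

end Functions

section Homogeneity

variable {R S : Type*} [CommRing R] [CommRing S]

lemma zonalKernel_mul (k : ℕ) (c : ℕ → R) (l s w : R) :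
    zonalKernel k c (l * s) (l ^ 2 * w) = l ^ k * zonalKernel k c s w := by
  rw [zonalKernel, zonalKernel, Finset.mul_sum]
  refine Finset.sum_congr rfl fun j hj => ?_
  have hk : k = 2 * j + (k - 2 * j) := by have := Finset.mem_range.1 hj; omega
  conv_rhs => rw [hk]
  rw [mul_pow, mul_pow, ← pow_mul, pow_add, ← hk]
  ring

lemma sphereForm_mul (l s z : R) : sphereForm (l * s) (l * z) = l ^ 7 * sphereForm s z := by
  rw [sphereForm, sphereForm, Finset.mul_sum]
  refine Finset.sum_congr rfl fun k hk => ?_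
  have hk7 : k + (7 - k) = 7 := by have := Finset.mem_range.1 hk; omega
  rw [mul_pow l z 2, zonalKernel_mul, mul_pow, ← hk7, pow_add, hk7]
  ring

lemma homogEval_mul (l x z : R) {f : List ℤ} {n : ℕ} (hf : f.length = n + 1) :
    homogEval (l * x) (l * z) f = l ^ n * homogEval x z f := by
  induction f generalizing n with
  | nil => simp at hf
  | cons c f ih =>
    obtain rfl : f.length = n := by simpa using hf
    rcases f with _ | ⟨d, f⟩
    · simp [homogEval]
    · change c * (l * z) ^ (f.length + 1) + l * x * homogEval (l * x) (l * z) (d :: f) =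
        l ^ (f.length + 1) * (c * z ^ (f.length + 1) + x * homogEval x z (d :: f))
      rw [ih List.length_cons]
      ring

lemma map_zonalKernel (φ : R →+* S) (k : ℕ) (c : ℕ → R) (s w : R) :
    φ (zonalKernel k c s w) = zonalKernel k (fun j => φ (c j)) (φ s) (φ w) := by
  simp [zonalKernel]

lemma map_sphereForm (φ : R →+* S) (s z : R) : φ (sphereForm s z) = sphereForm (φ s) (φ z) := by
  simp [sphereForm, map_zonalKernel]

lemma map_homogEval (φ : R →+* S) (x z : R) (f : List ℤ) :
    φ (homogEval x z f) = homogEval (φ x) (φ z) f := by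
  induction f with
  | nil => simp [homogEval]
  | cons c f ih => simp [homogEval, ih]

lemma map_poleForm (φ : R →+* S) (a b c : R) :
    φ (poleForm a b c) = poleForm (φ a) (φ b) (φ c) := by
  simp [poleForm, map_zonalKernel, map_homogEval, map_ofNat φ]

lemma length_factor {k r : ℕ} (hk : k < 7) (hr : r < 17 - k) :
    (factor k r).length = 16 - k + 1 := by
  have table : ∀ k < 7, ∀ r < 17 - k, (factor k r).length = 16 - k + 1 := by decide +kernel
  exact table k hk r hr

/-- The inner product in `[-1, 1/2]` with coordinate `x` in `[0, 1]`. -/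
noncomputable def toInner (x : ℝ) : ℝ := (3 * x - 2) / 2

lemma two_mul_toInner_div {a : ℝ} (ha : 1 + a ≠ 0) :
    2 * (1 + a) * toInner (a / (1 + a)) = a - 2 := by
  rw [toInner]
  field_simp
  ring

lemma homogEval_factor {k r : ℕ} (hk : k < 7) (hr : r < 17 - k) {a : ℝ} (ha : 1 + a ≠ 0) :
    homogEval a 1 (factor k r) =
      (1 + a) ^ (16 - k) * factorEval k r (toInner (a / (1 + a))) := by
  rw [factorEval, ← homogEval_mul _ _ _ (length_factor hk hr), toInner]
  congr 1 <;> field_simp <;> ring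

lemma sum_homogEval_factor_mul {k : ℕ} (hk : k < 7) {a b : ℝ} (ha : 1 + a ≠ 0) (hb : 1 + b ≠ 0) :
    ∑ r ∈ Finset.range (17 - k), homogEval a 1 (factor k r) * homogEval b 1 (factor k r) =
      ((1 + a) * (1 + b)) ^ (16 - k) * ∑ r ∈ Finset.range (17 - k),
        factorEval k r (toInner (a / (1 + a))) * factorEval k r (toInner (b / (1 + b))) := by
  rw [Finset.mul_sum]
  refine Finset.sum_congr rfl fun r hr => ?_
  rw [homogEval_factor hk (Finset.mem_range.1 hr) ha,
    homogEval_factor hk (Finset.mem_range.1 hr) hb, mul_pow]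
  ring

lemma poleForm_eq {a b c : ℝ} (ha : 1 + a ≠ 0) (hb : 1 + b ≠ 0) (hc : 1 + c ≠ 0) :
    poleForm a b c = 4 ^ 6 * poleKernel (toInner (a / (1 + a))) (toInner (b / (1 + b)))
      (toInner (c / (1 + c))) * ((1 + a) * (1 + b) * (1 + c)) ^ 16 := by
  have hu := two_mul_toInner_div ha
  have hv := two_mul_toInner_div hb
  have ht := two_mul_toInner_div hc
  set u := toInner (a / (1 + a))
  set v := toInner (b / (1 + b))
  set t := toInner (c / (1 + c))
  have inner_eq : 2 * (c - 2) * (1 + a) * (1 + b) - (a - 2) * (b - 2) * (1 + c) =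
      4 * ((1 + a) * (1 + b) * (1 + c)) * (t - u * v) := by
    rw [← hu, ← hv, ← ht]; ring
  have square_eq {e w : ℝ} (h : 2 * (1 + e) * w = e - 2) :
      12 * e + 3 * e ^ 2 = 4 * (1 + e) ^ 2 * (1 - w ^ 2) := by
    linear_combination (2 * (1 + e) * w + (e - 2)) * h
  have norm_eq : (12 * a + 3 * a ^ 2) * (12 * b + 3 * b ^ 2) * (1 + c) ^ 2 =
      (4 * ((1 + a) * (1 + b) * (1 + c))) ^ 2 * ((1 - u ^ 2) * (1 - v ^ 2)) := by
    rw [square_eq hu, square_eq hv]; ring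
  rw [poleForm, poleKernel, Finset.mul_sum, Finset.sum_mul]
  refine Finset.sum_congr rfl fun k hk => ?_
  have hk7 := Finset.mem_range.1 hk
  have factors := sum_homogEval_factor_mul hk7 ha hb
  have four_pow : (4 : ℝ) ^ 6 = 4 ^ (6 - k) * 4 ^ k := by rw [← pow_add]; congr 1; omega
  have pow_sixteen (x : ℝ) : x ^ 16 = x ^ (16 - k) * x ^ k := by rw [← pow_add]; congr 1; omega
  rw [inner_eq, norm_eq, zonalKernel_mul, factors, ← Finset.sum_mul, four_pow, pow_sixteen,
    mul_pow 4, mul_pow _ (1 + c) (16 - k)]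
  ring

end Homogeneity

/-! ### The pointwise bounds -/

section Numerators

open MvPolynomial

/-- The bound on pairs, scaled by `2 ^ 24` like the two-point and three-point functions. -/
def pairBound : ℤ := 886462 * 2 ^ 24

/-- The bound on triples, scaled by `2 ^ 24`. -/
def tripleBound : ℤ := -748518312 * 2 ^ 4

section Forms

variable {R : Type*} [CommRing R]

/-- The numerator of `4 ^ 6 * 3 ^ 16 * (pairBound - sphereKernel u - poleKernel u u 1)` in the
coordinate `a` of `u`; the inner product `1` has coordinate `-4`. -/
def pairNumerator (a : R) : R :=
  4 ^ 6 * 3 ^ 16 * (pairBound * (1 + a) ^ 32 -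
    2 ^ 17 * (1 + a) ^ 25 * sphereForm (a - 2) (2 * (1 + a))) - poleForm a a (-4)

/-- The numerator of `4 ^ 6 * (3 * tripleBound - cyclicSum poleKernel u v t)`. -/
def tripleNumerator (a b c : R) : R :=
  3 * 4 ^ 6 * tripleBound * ((1 + a) * (1 + b) * (1 + c)) ^ 16 -
    (poleForm a b c + poleForm b c a + poleForm c a b)

/-- The numerator of `-2 ^ 30 * gramDet u v t`. -/
def gramNumerator (a b c : R) : R :=
  -2 ^ 28 * ((1 + a) * (1 + b) * (1 + c)) ^ 14 *
    (4 * ((1 + a) * (1 + b) * (1 + c)) ^ 2 +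
      (a - 2) * (b - 2) * (c - 2) * ((1 + a) * (1 + b) * (1 + c)) -
      ((a - 2) * ((1 + b) * (1 + c))) ^ 2 - ((b - 2) * ((1 + c) * (1 + a))) ^ 2 -
      ((c - 2) * ((1 + a) * (1 + b))) ^ 2)

variable {S : Type*} [CommRing S] (φ : R →+* S)

lemma map_pairNumerator (a : R) : φ (pairNumerator a) = pairNumerator (φ a) := by
  simp [pairNumerator, map_poleForm, map_sphereForm, map_ofNat φ]

lemma map_tripleNumerator (a b c : R) :
    φ (tripleNumerator a b c) = tripleNumerator (φ a) (φ b) (φ c) := by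
  simp [tripleNumerator, map_poleForm, map_ofNat φ]

lemma map_gramNumerator (a b c : R) :
    φ (gramNumerator a b c) = gramNumerator (φ a) (φ b) (φ c) := by
  simp [gramNumerator, map_ofNat φ]

end Forms

namespace IsBounded

variable {ι : Type*} {δ ε ζ : ι → ℕ} {M N : ℕ} {p q r s w z : MvPolynomial ι ℤ}

lemma ofNat (δ : ι → ℕ) (c : ℕ) [c.AtLeastTwo] :
    IsBounded δ c (OfNat.ofNat c : MvPolynomial ι ℤ) := by
  have bounded := intCast δ (c : ℤ)
  rw [Int.natAbs_natCast, Int.cast_natCast] at bounded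
  exact bounded

lemma one_add (hp : IsBounded δ N p) : IsBounded δ (1 + N) (1 + p) := by
  simpa using (intCast δ 1).add hp

lemma sub_two (hp : IsBounded δ N p) : IsBounded δ (N + 2) (p - 2) := hp.sub (ofNat δ 2)

lemma ofNat_mul (c : ℕ) [c.AtLeastTwo] (hp : IsBounded δ N p) :
    IsBounded δ (c * N) (OfNat.ofNat c * p) := by
  simpa using (ofNat 0 c).mul hp

lemma zonalKernel {c : ℕ → ℤ} {k : ℕ} (hc : ∀ j ≤ k / 2, (c j).natAbs ≤ N)
    (hs : IsBounded δ M s) (hw : IsBounded (2 • δ) (M ^ 2) w) :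
    IsBounded (k • δ) ((k / 2 + 1) * (N * M ^ k))
      (zonalKernel k (fun j => (c j : MvPolynomial ι ℤ)) s w) := by
  rw [← Finset.card_range (k / 2 + 1)]
  refine sum fun j hj => ?_
  have hk : 2 * j + (k - 2 * j) = k := by have := Finset.mem_range.1 hj; omega
  refine (((hw.pow j).intCast_mul (c j)).mul (hs.pow (k - 2 * j))).mono ?_ ?_
  · rw [smul_smul, ← add_smul, mul_comm, hk]
  · rw [mul_assoc, ← pow_mul, ← pow_add, hk]
    exact Nat.mul_le_mul_right _ (hc j (by omega))

lemma sphereForm (hs : IsBounded δ M s) (hz : IsBounded δ M z) :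
    IsBounded (7 • δ) (2 ^ 37 * M ^ 7) (sphereForm s z) := by
  have coeff_le : ∀ k < 8, ∀ j ≤ k / 2, (sphereCoeff k j).natAbs ≤ 2 ^ 10 := by decide
  have weight_le : ∀ k < 8, sphereWeight k ≤ 2 ^ 22 := by decide
  have term (k : ℕ) (hk : k ∈ Finset.range 8) : IsBounded (7 • δ) (2 ^ 34 * M ^ 7)
      ((sphereWeight k : MvPolynomial ι ℤ) * (KissingNumber.zonalKernel k
        (fun j => (sphereCoeff k j : MvPolynomial ι ℤ)) s (z ^ 2) * z ^ (7 - k))) := by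
    have hk8 := Finset.mem_range.1 hk
    have hk7 : k + (7 - k) = 7 := by omega
    have bounded := ((zonalKernel (coeff_le k hk8) hs (hz.pow 2)).mul (hz.pow (7 - k))).intCast_mul
      (sphereWeight k : ℤ)
    rw [Int.cast_natCast, Int.natAbs_natCast, ← add_smul, hk7] at bounded
    refine bounded.mono le_rfl ?_
    calc sphereWeight k * ((k / 2 + 1) * (2 ^ 10 * M ^ k) * M ^ (7 - k))
        ≤ 2 ^ 22 * ((3 + 1) * (2 ^ 10 * M ^ k) * M ^ (7 - k)) := by
          gcongr
          exacts [weight_le k hk8, by omega]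
      _ = 2 ^ 34 * M ^ (k + (7 - k)) := by ring
      _ = 2 ^ 34 * M ^ 7 := by rw [hk7]
  refine (sum term).mono le_rfl (le_of_eq ?_)
  rw [Finset.card_range]
  ring

lemma homogEval_one (hp : IsBounded δ 1 p) {f : List ℤ} {n : ℕ} (hf : f.length ≤ n + 1) :
    IsBounded (n • δ) (f.map Int.natAbs).sum (homogEval p 1 f) := by
  induction f generalizing n with
  | nil => simpa [homogEval] using intCast (n • δ) 0
  | cons c f ih =>
    rw [homogEval, one_pow, mul_one, List.map_cons, List.sum_cons]
    rcases n with _ | n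
    · obtain rfl : f = [] := by simpa using hf
      simpa [homogEval] using intCast (0 : ι → ℕ) c
    · refine (intCast _ c).add ?_
      rw [add_comm n, add_smul, one_smul]
      simpa using hp.mul (ih (by simpa using hf))

lemma homogEval_factor (hp : IsBounded δ 1 p) {k t : ℕ} (hk : k < 7) (ht : t < 17 - k) :
    IsBounded ((16 - k) • δ) (2 ^ 45) (homogEval p 1 (factor k t)) := by
  have norm_le : ∀ k < 7, ∀ t < 17 - k, ((factor k t).map Int.natAbs).sum ≤ 2 ^ 45 := by
    decide +kernel
  exact (homogEval_one hp (length_factor hk ht).le).mono le_rfl (norm_le k hk t ht)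

lemma poleForm_inner (hp : IsBounded δ 1 p) (hq : IsBounded ε 1 q) (hr : IsBounded ζ 4 r) :
    IsBounded (δ + ε + ζ) 93
      (2 * (r - 2) * (1 + p) * (1 + q) - (p - 2) * (q - 2) * (1 + r)) := by
  refine IsBounded.sub (M := 48) (N := 45) ?_ ((hp.sub_two.mul hq.sub_two).mul hr.one_add)
  refine (((hr.sub_two.ofNat_mul 2).mul hp.one_add).mul hq.one_add).mono (le_of_eq ?_) le_rfl
  abel

lemma poleForm_norm (hp : IsBounded δ 1 p) (hq : IsBounded ε 1 q) (hr : IsBounded ζ 4 r) :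
    IsBounded (2 • (δ + ε + ζ)) (93 ^ 2)
      ((12 * p + 3 * p ^ 2) * (12 * q + 3 * q ^ 2) * (1 + r) ^ 2) := by
  have quadratic {η : ι → ℕ} {x : MvPolynomial ι ℤ} (hx : IsBounded η 1 x) :
      IsBounded (2 • η) 15 (12 * x + 3 * x ^ 2) :=
    ((hx.ofNat_mul 12).mono (le_self_nsmul zero_le two_ne_zero) le_rfl).add
      ((hx.pow 2).ofNat_mul 3)
  rw [smul_add, smul_add]
  exact (((quadratic hp).mul (quadratic hq)).mul (hr.one_add.pow 2)).mono le_rfl (by norm_num)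

lemma poleForm (hp : IsBounded δ 1 p) (hq : IsBounded ε 1 q) (hr : IsBounded ζ 4 r) :
    IsBounded (16 • (δ + ε + ζ)) (2 ^ 200) (poleForm p q r) := by
  have coeff_le : ∀ k < 7, ∀ j ≤ k / 2, (poleCoeff k j).natAbs ≤ 2 ^ 9 := by decide
  refine (sum (s := Finset.range 7) (N := 2 ^ 197) fun k hk => ?_).mono le_rfl
    (by rw [Finset.card_range]; norm_num)
  have hk7 := Finset.mem_range.1 hk
  have kernel := zonalKernel (coeff_le k hk7) (poleForm_inner hp hq hr) (poleForm_norm hp hq hr)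
  have factors := sum (s := Finset.range (17 - k)) fun t ht =>
    (hp.homogEval_factor hk7 (Finset.mem_range.1 ht)).mul
      (hq.homogEval_factor hk7 (Finset.mem_range.1 ht))
  refine (((((ofNat 0 4).pow (6 - k)).mul kernel).mul factors).mul
    (hr.one_add.pow (16 - k))).mono (le_of_eq ?_) ?_
  · have split : 16 • (δ + ε + ζ) = k • (δ + ε + ζ) + (16 - k) • (δ + ε + ζ) := by
      rw [← add_smul]; congr 1; omega
    rw [split, smul_zero, zero_add]
    simp only [smul_add]
    abel
  · rw [Finset.card_range]
    calc 4 ^ (6 - k) * ((k / 2 + 1) * (2 ^ 9 * 93 ^ k)) * ((17 - k) * (2 ^ 45 * 2 ^ 45)) *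
          (1 + 4) ^ (16 - k)
        ≤ 4 ^ 6 * ((3 + 1) * (2 ^ 9 * 93 ^ 6)) * (17 * (2 ^ 45 * 2 ^ 45)) * (1 + 4) ^ 16 := by
          gcongr <;> omega
      _ ≤ 2 ^ 197 := by norm_num

end IsBounded

end Numerators

section Representation

open MvPolynomial

lemma isBounded_pairNumerator :
    IsBounded (fun _ => 32) (2 ^ 253) (pairNumerator (X 0) : MvPolynomial (Fin 1) ℤ) := by
  have hX : IsBounded (Pi.single 0 1) 1 (X 0 : MvPolynomial (Fin 1) ℤ) := .X 0
  have bound := (hX.one_add.pow 32).intCast_mul pairBound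
  have sphere := (((IsBounded.ofNat 0 2).pow 17).mul (hX.one_add.pow 25)).mul
    ((hX.sub_two.mono le_rfl (by norm_num)).sphereForm (M := 4) (hX.one_add.ofNat_mul 2))
  have pole := hX.poleForm hX (ζ := 0) (IsBounded.ofNat 0 4).neg
  have scale := ((IsBounded.ofNat (0 : Fin 1 → ℕ) 4).pow 6).mul ((IsBounded.ofNat 0 3).pow 16)
  have scaled := (scale.mul (bound.sub (sphere.mono (Pi.le_def.2 (by decide)) le_rfl))).mono
    (ε := 32 • Pi.single 0 1) (Pi.le_def.2 (by decide)) le_rfl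
  exact (scaled.sub (pole.mono (Pi.le_def.2 (by decide)) le_rfl)).mono
    (Pi.le_def.2 (by decide)) (by norm_num [pairBound])

lemma isBounded_tripleNumerator :
    IsBounded (fun _ => 16) (2 ^ 253)
      (tripleNumerator (X 0) (X 1) (X 2) : MvPolynomial (Fin 3) ℤ) := by
  have hX (i : Fin 3) : IsBounded (Pi.single i 1) 1 (X i : MvPolynomial (Fin 3) ℤ) := .X i
  have hX4 (i : Fin 3) := (hX i).mono le_rfl (by norm_num : 1 ≤ 4)
  have product := ((hX 0).one_add.mul (hX 1).one_add).mul (hX 2).one_add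
  have bound := ((((IsBounded.ofNat 0 4).pow 6).ofNat_mul 3).mul (.intCast 0 tripleBound)).mul
    (product.pow 16)
  have forms := (((hX 0).poleForm (hX 1) (hX4 2)).add
    (((hX 1).poleForm (hX 2) (hX4 0)).mono (Pi.le_def.2 (by decide)) le_rfl)).add
    (((hX 2).poleForm (hX 0) (hX4 1)).mono (Pi.le_def.2 (by decide)) le_rfl)
  exact ((bound.mono (Pi.le_def.2 (by decide)) le_rfl).sub forms).mono
    (Pi.le_def.2 (by decide)) (by norm_num [tripleBound])

lemma isBounded_gramNumerator :
    IsBounded (fun _ => 16) (2 ^ 253)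
      (gramNumerator (X 0) (X 1) (X 2) : MvPolynomial (Fin 3) ℤ) := by
  have hX (i : Fin 3) : IsBounded (Pi.single i 1) 1 (X i : MvPolynomial (Fin 3) ℤ) := .X i
  have product := ((hX 0).one_add.mul (hX 1).one_add).mul (hX 2).one_add
  have cross := (((hX 0).sub_two.mul (hX 1).sub_two).mul (hX 2).sub_two).mul product
  have square (i j k : Fin 3) := ((hX i).sub_two.mul ((hX j).one_add.mul (hX k).one_add)).pow 2
  have determinant := (((((product.pow 2).ofNat_mul 4).add
    (cross.mono (Pi.le_def.2 (by decide)) le_rfl)).sub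
    ((square 0 1 2).mono (Pi.le_def.2 (by decide)) le_rfl)).sub
    ((square 1 2 0).mono (Pi.le_def.2 (by decide)) le_rfl)).sub
    ((square 2 0 1).mono (Pi.le_def.2 (by decide)) le_rfl)
  exact ((((IsBounded.ofNat 0 2).pow 28).neg.mul (product.pow 14)).mul determinant).mono
    (Pi.le_def.2 (by decide)) (by norm_num)

section Continuity

variable {Y : Type*} [TopologicalSpace Y] {u v t : Y → ℝ}

lemma continuous_homogEval (hu : Continuous u) (hv : Continuous v) (f : List ℤ) :
    Continuous fun y => homogEval (u y) (v y) f := by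
  induction f with
  | nil => exact continuous_const
  | cons c f ih => simp only [homogEval]; fun_prop

@[fun_prop]
lemma continuous_sphereKernel (hu : Continuous u) : Continuous fun y => sphereKernel (u y) := by
  simp only [sphereKernel, sphereForm, zonalKernel]
  fun_prop

@[fun_prop]
lemma continuous_poleKernel (hu : Continuous u) (hv : Continuous v) (ht : Continuous t) :
    Continuous fun y => poleKernel (u y) (v y) (t y) := by
  have continuous_factorEval (k r : ℕ) : Continuous (factorEval k r) :=
    continuous_homogEval (by fun_prop) (by fun_prop) _
  simp only [poleKernel, zonalKernel]
  fun_prop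

@[fun_prop]
lemma continuous_toInner : Continuous toInner := by
  unfold toInner
  fun_prop

end Continuity

lemma represents_pairNumerator :
    Represents 32 (2 ^ 40) (pairNumerator (X 0)) fun x : Fin 1 → ℝ =>
      4 ^ 6 * 3 ^ 16 * (pairBound - (sphereKernel (toInner (x 0)) +
        poleKernel (toInner (x 0)) (toInner (x 0)) 1)) / 2 ^ 40 where
  pos := by positivity
  continuous := by fun_prop
  isNumerator a ha := by
    have sphere := sphereForm_mul (2 * (1 + a 0)) (toInner (a 0 / (1 + a 0))) 1
    have pole := poleForm_eq (ha 0) (ha 0) (c := -4) (by norm_num)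
    have inner_one : toInner (-4 / (1 + -4)) = 1 := by norm_num [toInner]
    rw [two_mul_toInner_div (ha 0), mul_one] at sphere
    rw [inner_one] at pole
    rw [← AlgHom.coe_toRingHom, map_pairNumerator, AlgHom.coe_toRingHom, aeval_X, pairNumerator,
      sphere, pole, Fin.prod_univ_one]
    simp only [sphereKernel]
    push_cast
    ring
  isBounded := isBounded_pairNumerator

lemma represents_tripleNumerator :
    Represents 16 (2 ^ 17) (tripleNumerator (X 0) (X 1) (X 2)) fun x : Fin 3 → ℝ =>
      4 ^ 6 * (3 * tripleBound -
        cyclicSum poleKernel (toInner (x 0)) (toInner (x 1)) (toInner (x 2))) / 2 ^ 17 where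
  pos := by positivity
  continuous := by
    simp only [cyclicSum]
    fun_prop
  isNumerator a ha := by
    rw [← AlgHom.coe_toRingHom, map_tripleNumerator, AlgHom.coe_toRingHom, aeval_X, aeval_X,
      aeval_X, tripleNumerator, poleForm_eq (ha 0) (ha 1) (ha 2), poleForm_eq (ha 1) (ha 2) (ha 0),
      poleForm_eq (ha 2) (ha 0) (ha 1), Fin.prod_univ_three]
    simp only [cyclicSum]
    generalize 1 + a 0 = A, 1 + a 1 = B, 1 + a 2 = C
    push_cast
    ring
  isBounded := isBounded_tripleNumerator

lemma represents_gramNumerator :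
    Represents 16 1 (gramNumerator (X 0) (X 1) (X 2)) fun x : Fin 3 → ℝ =>
      -2 ^ 30 * gramDet (toInner (x 0)) (toInner (x 1)) (toInner (x 2)) where
  pos := by positivity
  continuous := by
    simp only [gramDet]
    fun_prop
  isNumerator a ha := by
    rw [← AlgHom.coe_toRingHom, map_gramNumerator, AlgHom.coe_toRingHom, aeval_X, aeval_X,
      aeval_X, gramNumerator, Fin.prod_univ_three, ← two_mul_toInner_div (ha 0),
      ← two_mul_toInner_div (ha 1), ← two_mul_toInner_div (ha 2)]
    simp only [gramDet]
    generalize 1 + a 0 = A, 1 + a 1 = B, 1 + a 2 = C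
    push_cast
    ring
  isBounded := isBounded_gramNumerator

end Representation

section Verification

open MvPolynomial

/-- The certificate for `sphereKernel_add_poleKernel_le`, found by bisecting until all Bernstein
coefficients are nonnegative. -/
def pairCertificate : Certificate 1 :=
  .split 0 (.split 0 (.split 0 .leaf (.split 0 .leaf (.split 0 (.split 0 .leaf .leaf) .leaf)))
  (.split 0 .leaf .leaf)) (.split 0 (.split 0 .leaf .leaf) (.split 0 (.split 0 .leaf .leaf)
  (.split 0 .leaf (.split 0 .leaf .leaf))))

/-- The certificate for `cyclicSum_poleKernel_le_of_sorted`; the multipliers settle the cells that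
leave the region `0 ≤ gramDet u v t`. -/
def tripleCertificate : Certificate 3 :=
  .split 0 (.split 1 (.split 2 (.split 0 (.split 1 (.mult 259651) (.split 2 .order (.split 0
  .leaf (.split 1 (.split 2 (.mult 27659) (.split 2 (.split 1 (.mult 5129) (.split 0
  (.mult 2117) (.split 2 (.split 1 (.mult 2052) (.split 0 (.mult 1127) (.split 0 (.mult 860)
  (.split 1 (.mult 660) (.split 0 (.mult 429) (.mult 334)))))) (.split 1 (.split 0 (.mult 1040)
  (.split 0 (.mult 795) (.split 2 (.mult 601) (.split 1 (.mult 385) (.mult 214))))) (.split 0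
  (.mult 430) (.split 1 (.split 0 (.mult 344) (.mult 200)) (.mult 48))))))) (.split 1 (.split 0
  (.mult 1193) (.split 2 (.split 1 (.mult 1213) (.split 0 (.mult 820) (.split 2 (.mult 615)
  (.split 0 (.mult 386) (.mult 222))))) (.split 1 (.mult 504) (.split 0 (.split 2 (.mult 336)
  (.mult 198)) (.split 1 (.mult 208) (.split 0 (.mult 139) .leaf)))))) (.split 1 (.split 0
  (.mult 416) (.split 2 (.split 1 (.split 0 (.mult 443) (.split 0 (.split 1 (.mult 342)
  (.mult 264)) (.split 0 (.mult 191) (.mult 69)))) (.split 0 (.mult 240) (.split 0 (.mult 168)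
  .leaf))) (.split 0 (.split 2 (.mult 142) (.mult 56)) (.mult 17)))) (.split 0 .leaf .leaf)))))
  (.split 2 .order (.split 1 (.split 1 (.split 2 (.split 0 (.mult 382) (.split 2 (.split 0
  (.mult 401) (.split 0 (.mult 315) (.mult 162))) .leaf)) .leaf) .leaf) .leaf)))))) (.split 1
  .order (.split 2 .order (.split 0 (.split 1 (.split 2 (.split 1 (.split 0 (.mult 13123)
  .order) (.split 2 .order (.split 0 (.split 0 (.split 2 (.mult 2475) (.split 1 (.mult 1528)
  (.split 0 (.split 1 (.mult 903) (.split 0 (.mult 661) (.mult 532))) (.split 1 (.split 0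
  (.mult 609) (.mult 467)) (.split 0 (.mult 399) (.mult 247)))))) (.split 1 (.split 2
  (.mult 1413) (.split 0 (.split 0 (.mult 786) (.mult 636)) (.split 1 (.mult 495) (.mult 244))))
  (.split 2 .order (.split 0 (.split 1 (.mult 318) (.mult 40)) .leaf)))) (.split 0 (.split 1
  (.split 2 (.split 0 (.mult 720) (.split 0 (.mult 459) (.mult 338))) (.split 0 (.mult 214)
  .leaf)) (.split 2 .order .leaf)) (.split 1 .order .leaf))))) (.split 2 (.split 0 (.split 1
  (.split 2 (.split 0 (.mult 2306) (.split 1 .order (.split 0 (.split 1 (.mult 799) (.mult 557))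
  (.split 1 .order (.split 0 (.mult 311) (.mult 174)))))) (.split 0 (.split 1 (.mult 1245)
  (.split 2 (.split 0 (.mult 746) (.mult 523)) (.split 0 (.mult 481) (.split 0 (.mult 291)
  (.mult 195))))) (.split 1 .order (.split 0 (.split 1 (.split 0 (.mult 326) (.mult 225))
  (.mult 103)) (.mult 103))))) (.split 0 (.split 2 (.split 1 (.split 0 (.split 2 (.mult 871)
  (.split 0 (.mult 619) (.mult 503))) (.split 2 (.split 0 (.mult 598) (.mult 469)) (.split 0
  (.mult 385) (.mult 257)))) (.split 0 (.split 1 (.split 2 (.mult 445) (.mult 219)) (.split 0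
  (.mult 211) .leaf)) (.split 0 (.mult 162) .leaf))) (.split 1 (.split 0 (.split 2 (.split 1
  (.mult 401) (.mult 219)) (.split 0 (.mult 188) (.mult 27))) (.split 1 (.mult 160) .leaf))
  .leaf)) (.split 0 (.split 1 (.split 1 (.split 2 (.split 0 (.mult 337) (.mult 190)) .leaf)
  (.mult 65)) .leaf) .leaf))) (.split 1 .order .leaf)) (.split 0 (.split 1 (.split 2 (.split 0
  (.split 1 (.split 2 (.mult 543) (.mult 291)) (.split 0 (.split 1 (.mult 251) (.mult 117))
  (.mult 45))) (.split 1 .order .leaf)) (.split 0 (.split 0 (.mult 77) .leaf) .leaf)) .leaf)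
  .leaf))) (.split 2 .order (.split 0 .leaf (.split 1 (.split 2 .leaf .leaf) (.split 2 .order
  (.split 0 (.split 0 .leaf .leaf) (.split 1 (.split 2 (.split 1 .leaf (.split 0 .leaf .leaf))
  .leaf) (.split 0 .leaf .leaf)))))))) (.split 1 .order (.split 2 .order (.split 0 (.split 1
  (.split 2 (.split 0 .leaf (.split 1 .order (.split 2 .order (.split 0 .leaf (.split 0 .leaf
  .leaf))))) (.split 2 (.split 0 .leaf (.split 1 .order .leaf)) .leaf)) (.split 2 .order
  (.split 1 (.split 2 (.split 0 (.split 1 (.split 0 .leaf .leaf) (.split 0 .leaf .leaf)) .leaf)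
  .leaf) .leaf))) (.split 1 .order (.split 2 .order .leaf))))))))) (.split 0 (.split 1 (.split 2
  (.split 0 .leaf (.split 1 .order (.split 2 (.split 2 (.mult 261) .leaf) (.split 0 (.split 2
  .leaf (.split 1 .leaf (.split 2 (.split 1 (.split 1 .leaf .leaf) .leaf) .leaf))) (.split 1
  .order (.split 2 .leaf (.split 2 (.split 1 (.split 0 (.split 0 (.split 1 (.split 2 (.split 0
  .leaf .leaf) (.split 2 (.split 0 .leaf (.split 1 .order (.split 0 (.split 1 .leaf .leaf)
  .leaf))) .leaf)) (.split 2 .leaf (.split 0 .leaf .leaf))) (.split 1 .order .leaf)) .order)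
  .leaf) .leaf))))))) (.split 2 (.split 2 .leaf .leaf) (.split 2 .leaf (.split 2 .leaf (.split 2
  (.split 0 (.split 0 (.mult 453) .leaf) .leaf) (.split 0 (.split 1 (.split 0 (.mult 9998)
  (.split 1 .order .leaf)) (.split 0 (.split 0 (.split 0 (.mult 2425) .leaf) .leaf) .leaf))
  (.split 1 .order (.split 0 (.split 1 .leaf .leaf) (.split 1 .order .leaf))))))))) (.split 2
  (.split 0 .leaf (.split 0 (.split 0 .leaf (.split 2 (.split 1 (.split 0 .leaf (.split 0 .leaf
  (.split 2 (.split 1 (.split 2 (.mult 95) .leaf) .leaf) (.split 1 .leaf (.split 2 (.split 1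
  .leaf .leaf) (.split 1 .leaf (.split 1 .leaf .leaf))))))) (.split 2 .leaf (.split 2 (.split 1
  .leaf .leaf) (.split 1 .leaf .leaf)))) (.split 1 (.split 1 .leaf .leaf) (.split 1 .leaf
  (.split 2 .leaf .leaf))))) (.split 2 (.split 1 (.split 2 (.split 2 (.split 1 (.split 1
  (.mult 152) (.split 0 (.split 2 (.mult 102) (.mult 28)) .leaf)) (.mult 5)) .leaf) (.split 1
  .leaf (.split 0 (.split 2 (.split 1 .leaf (.split 0 .leaf .leaf)) (.split 1 .leaf (.split 0
  (.split 2 (.split 1 .leaf .leaf) .leaf) .leaf))) .leaf))) (.split 2 .leaf (.split 0 (.split 2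
  (.split 1 .leaf (.split 0 (.split 1 .leaf (.split 2 (.split 0 .leaf .leaf) (.split 0 (.split 1
  .leaf (.split 2 .leaf .leaf)) (.split 1 .leaf .leaf)))) .leaf)) (.split 1 (.split 0 (.split 0
  .leaf .leaf) .leaf) (.split 0 (.split 1 (.split 2 (.split 0 .leaf .leaf) .leaf) (.split 0
  (.split 1 .leaf .leaf) .leaf)) .leaf))) .leaf))) (.split 1 (.split 1 .leaf (.split 0 .leaf
  .leaf)) (.split 0 (.split 1 (.split 2 .leaf .leaf) (.split 2 .leaf (.split 0 (.split 1
  (.split 0 .leaf .leaf) .leaf) .leaf))) (.split 1 .leaf .leaf)))))) (.split 0 (.split 1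
  (.split 2 .leaf (.split 1 .leaf (.split 0 .leaf .leaf))) (.split 2 (.split 0 .leaf (.split 2
  .leaf (.split 1 .leaf .leaf))) (.split 1 .leaf .leaf))) (.split 2 (.split 1 (.split 2
  (.split 1 .leaf (.split 0 (.split 2 (.split 1 .leaf .leaf) .leaf) (.split 2 (.split 1 .leaf
  (.split 0 (.split 1 .leaf .leaf) .leaf)) .leaf))) (.split 1 .leaf .leaf)) (.split 2 (.split 0
  (.split 2 .leaf .leaf) (.split 0 (.split 2 (.split 1 .leaf (.split 0 .leaf .leaf)) .leaf)
  .leaf)) .leaf)) (.split 1 (.split 0 .leaf (.split 1 .leaf (.split 0 (.split 1 .leaf .leaf)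
  .leaf))) (.split 1 (.split 0 .leaf .leaf) (.split 0 .leaf .leaf))))))) (.split 1 .order
  (.split 2 (.split 0 (.split 1 (.split 2 (.split 2 (.split 0 .leaf (.split 1 .order (.split 2
  (.split 0 .leaf (.split 1 .order (.split 2 .leaf (.split 0 .leaf (.split 1 .order .leaf)))))
  (.split 0 .leaf (.split 1 .order .leaf))))) (.split 0 .leaf (.split 1 .order (.split 0 .leaf
  (.split 1 .order .leaf))))) (.split 0 (.split 2 .leaf (.split 1 .leaf (.split 0 .leaf .leaf)))
  (.split 1 .order (.split 2 .leaf .leaf)))) (.split 2 (.split 0 (.split 1 (.split 2 .leaf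
  .leaf) (.split 2 .leaf .leaf)) (.split 1 (.split 2 (.split 0 (.split 1 (.split 1 .leaf .leaf)
  .leaf) (.split 2 (.split 1 (.split 0 .leaf (.split 0 .leaf .leaf)) .leaf) (.split 0 .leaf
  .leaf))) (.split 0 (.split 1 .leaf .leaf) .leaf)) (.split 2 (.split 0 .leaf .leaf) .leaf)))
  (.split 0 .leaf .leaf))) (.split 1 .order (.split 2 (.split 2 .leaf (.split 0 (.split 1 .leaf
  .leaf) (.split 1 .order .leaf))) (.split 0 (.split 1 .leaf .leaf) (.split 1 .order .leaf)))))
  (.split 2 (.split 0 (.split 1 (.split 2 (.split 0 (.split 1 (.split 0 .leaf .leaf) .leaf)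
  (.split 2 .leaf .leaf)) (.split 0 (.split 1 (.split 0 (.split 1 .leaf .leaf) .leaf) .leaf)
  .leaf)) (.split 1 (.split 2 (.split 2 .leaf .leaf) .leaf) (.split 2 (.split 0 .leaf .leaf)
  .leaf))) (.split 1 .order (.split 2 (.split 2 .leaf .leaf) (.split 0 (.split 1 (.split 2
  (.split 0 .leaf .leaf) .leaf) .leaf) .leaf)))) (.split 0 (.split 1 .leaf (.split 1 .leaf
  .leaf)) (.split 1 .order (.split 2 .leaf (.split 2 .leaf (.split 2 .leaf (.split 2 .leaf
  (.split 0 (.split 0 .leaf .leaf) .leaf)))))))))))) (.split 2 .order (.split 1 (.split 2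
  (.split 0 (.split 0 (.split 2 (.split 1 .leaf .order) (.split 1 (.split 0 (.split 1 .leaf
  .leaf) (.split 1 .leaf .leaf)) .leaf)) (.split 1 (.split 2 (.split 0 (.split 0 .leaf (.split 1
  (.split 2 (.split 1 .leaf (.split 2 .order (.split 1 (.split 1 .leaf .leaf) .leaf))) (.split 1
  (.split 2 (.split 2 (.split 1 .leaf .leaf) .leaf) .leaf) .leaf)) (.split 2 .order .leaf)))
  (.split 2 (.split 1 (.split 0 (.split 1 (.split 2 .leaf (.split 0 (.split 2 .leaf (.split 1
  .leaf (.split 0 (.split 2 .leaf (.split 1 .leaf .leaf)) (.split 1 .leaf .leaf)))) .leaf))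
  (.split 2 .order (.split 0 (.split 2 (.split 1 (.split 0 (.split 1 .leaf (.split 2 .order
  .leaf)) (.split 1 .leaf .leaf)) .order) (.split 1 (.split 0 (.split 2 (.split 1 .leaf .leaf)
  .leaf) .leaf) .leaf)) .leaf))) .leaf) .order) (.split 1 (.split 0 (.split 2 (.split 1
  (.split 0 (.split 2 (.split 1 (.split 0 (.split 2 (.split 0 .leaf .leaf) (.split 1 (.split 0
  .leaf .leaf) (.split 0 .leaf .leaf))) (.split 1 .leaf .leaf)) (.split 0 (.split 2 (.split 1
  (.split 0 .leaf .leaf) .leaf) .leaf) .leaf)) (.split 0 (.split 1 (.split 0 .leaf (.split 1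
  .leaf .leaf)) .leaf) .leaf)) .leaf) .leaf) .leaf) .leaf) .leaf))) (.split 0 .leaf (.split 0
  (.split 2 .leaf (.split 1 .leaf .leaf)) .leaf))) (.split 2 .order (.split 0 .leaf (.split 0
  (.split 1 (.split 2 (.split 0 .leaf .leaf) .leaf) .leaf) .leaf))))) (.split 0 (.split 0
  (.split 1 (.split 2 .leaf (.split 1 .leaf .leaf)) (.split 2 .order .leaf)) (.split 1 (.split 2
  .leaf (.split 1 .leaf .leaf)) (.split 2 .order .leaf))) (.split 1 (.split 2 (.split 1 .leaf
  .leaf) .leaf) (.split 2 .order .leaf)))) (.split 0 (.split 1 (.split 0 (.split 1 .leaf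
  (.split 2 (.split 2 .leaf .leaf) .leaf)) (.split 2 (.split 2 (.split 0 (.split 1 .leaf .leaf)
  (.split 2 (.split 0 (.split 1 (.split 0 .leaf .leaf) .leaf) (.split 1 .leaf .leaf)) (.split 0
  (.split 0 .leaf .leaf) .leaf))) .leaf) (.split 0 (.split 1 .leaf .leaf) (.split 1 .leaf
  (.split 0 (.split 1 (.split 0 .leaf .leaf) .leaf) .leaf))))) (.split 0 .leaf (.split 1
  (.split 2 (.split 2 (.split 0 (.split 2 .leaf .leaf) (.split 2 (.split 0 .leaf .leaf) .leaf))
  .leaf) .leaf) (.split 0 (.split 2 (.split 2 (.split 0 .leaf .leaf) .leaf) (.split 1 .leaf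
  .leaf)) (.split 1 (.split 0 (.split 2 (.split 2 (.split 2 .leaf .leaf) .leaf) (.split 1 .leaf
  (.split 1 (.split 0 (.split 0 .leaf .leaf) .leaf) (.split 0 .leaf .leaf)))) .leaf) (.split 2
  .leaf .leaf)))))) (.split 1 (.split 2 (.split 0 (.split 2 (.split 2 .leaf (.split 0 .leaf
  .leaf)) .leaf) (.split 2 .leaf .leaf)) (.split 0 .leaf .leaf)) (.split 0 (.split 1 (.split 2
  (.split 2 (.split 0 .leaf (.split 2 .leaf .leaf)) (.split 0 .leaf .leaf)) .leaf) (.split 2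
  (.split 0 (.split 2 (.split 0 .leaf .leaf) .leaf) (.split 2 .leaf .leaf)) (.split 0 .leaf
  .leaf))) (.split 2 (.split 2 .leaf (.split 0 .leaf .leaf)) (.split 1 .leaf .leaf))))))
  (.split 2 .order (.split 0 (.split 0 (.split 0 (.split 1 (.split 2 (.split 0 (.split 0
  (.mult 1086) (.mult 576)) (.split 1 (.split 0 (.mult 89) .leaf) (.mult 27))) (.mult 15834))
  (.mult 20102)) (.split 0 (.split 0 (.split 1 (.split 2 .leaf (.mult 2027)) (.mult 2588))
  (.split 1 (.split 2 .leaf (.mult 647)) (.mult 837))) (.split 1 (.split 1 .leaf .leaf) .leaf)))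
  (.split 1 (.split 2 (.split 2 (.split 1 (.split 0 (.split 1 (.split 1 .leaf .leaf) .leaf)
  (.split 1 (.split 2 (.split 0 (.split 1 .leaf (.split 0 .leaf .leaf)) .leaf) (.split 0 .leaf
  .leaf)) (.split 2 .order (.split 0 (.split 2 (.split 0 .leaf .leaf) .leaf) (.split 1 .leaf
  .leaf))))) .order) (.split 1 .leaf .leaf)) .leaf) .leaf)) (.split 2 (.split 1 (.split 0
  (.split 1 (.split 2 .leaf .leaf) (.split 2 .order .leaf)) (.split 0 .leaf .leaf)) .order)
  (.split 0 (.split 1 (.split 1 (.split 0 .leaf (.split 1 (.split 1 (.split 0 .leaf .leaf)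
  .leaf) .leaf)) .leaf) .leaf) (.split 2 .leaf (.split 0 (.split 1 (.split 1 (.split 1 .leaf
  .leaf) .leaf) .leaf) (.split 0 (.split 1 (.split 1 .leaf .leaf) .leaf) (.split 0 (.split 1
  .leaf (.split 0 .leaf .leaf)) .leaf))))))))))) (.split 1 .order (.split 2 .order (.split 2
  (.split 1 (.split 0 (.split 2 (.split 1 (.split 0 .leaf .order) .order) (.split 0 (.split 1
  .leaf .leaf) (.split 1 .order (.split 0 .leaf (.split 0 .leaf .leaf))))) .order) .order)
  (.split 0 (.split 1 (.split 2 (.split 2 (.split 0 (.split 0 .leaf .leaf) (.split 1 .order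
  .leaf)) (.split 1 .leaf (.split 0 .leaf .leaf))) (.split 2 (.split 0 .leaf (.split 1 .order
  (.split 0 .leaf .leaf))) (.split 0 (.split 1 .leaf .leaf) (.split 1 .order (.split 0 (.split 1
  .leaf .leaf) (.split 1 .order (.split 0 .leaf .leaf))))))) (.split 1 (.split 2 (.split 0
  (.split 1 .leaf .leaf) (.split 1 (.split 2 (.split 1 .leaf (.split 2 .order .leaf)) .leaf)
  .leaf)) (.split 0 .leaf (.split 0 .leaf .leaf))) (.split 2 .order (.split 0 (.split 0 .leaf
  (.split 0 .leaf .leaf)) (.split 1 (.split 2 .leaf (.split 2 .leaf (.split 0 .leaf (.split 0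
  .leaf .leaf)))) (.split 2 .order (.split 0 .leaf .leaf))))))) (.split 1 .order (.split 0
  (.split 1 (.split 1 (.split 2 (.split 0 (.split 2 .leaf .leaf) .order) (.split 0 .leaf
  .order)) (.split 0 .leaf .leaf)) (.split 2 .order (.split 1 .leaf (.split 2 .order (.split 0
  (.split 0 .leaf .leaf) .leaf))))) (.split 1 .order (.split 2 .order (.split 2 (.split 1 .leaf
  .order) (.split 0 (.split 1 .leaf .leaf) (.split 1 .order .leaf)))))))))))

lemma verify_pairCertificate :
    pairCertificate.verify 32 (2 ^ 40) (pairNumerator (kroneckerPoint 32 1 0)) 0 := by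
  decide +kernel

set_option maxRecDepth 1000000 in
lemma verify_tripleCertificate :
    tripleCertificate.verify 16 (2 ^ 17)
      (tripleNumerator (kroneckerPoint 16 3 0) (kroneckerPoint 16 3 1) (kroneckerPoint 16 3 2))
      (gramNumerator (kroneckerPoint 16 3 0) (kroneckerPoint 16 3 1) (kroneckerPoint 16 3 2)) := by
  decide +kernel

end Verification

section Bounds

open MvPolynomial

lemma toInner_two_thirds_mul (u : ℝ) : toInner (2 / 3 * (1 + u)) = u := by
  rw [toInner]
  ring

lemma two_thirds_mul_mem_Icc {u : ℝ} (hu : u ∈ Set.Icc (-1) (1 / 2)) :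
    2 / 3 * (1 + u) ∈ Set.Icc (0 : ℝ) 1 :=
  ⟨by linarith [hu.1], by linarith [hu.2]⟩

lemma represents_zero {d n : ℕ} :
    Represents n 1 (0 : MvPolynomial (Fin d) ℤ) fun _ => 0 where
  pos := one_pos
  continuous := continuous_const
  isNumerator a _ := by simp
  isBounded := by simpa using (IsBounded.intCast (fun _ : Fin d => n) 0).mono le_rfl (by norm_num)

lemma sphereKernel_add_poleKernel_le {u : ℝ} (hu : u ∈ Set.Icc (-1) (1 / 2)) :
    sphereKernel u + poleKernel u u 1 ≤ pairBound := by
  have verified : pairCertificate.verify 32 (2 ^ 40)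
      ((pairNumerator (X 0)).eval (kroneckerPoint 32 1)) (eval (kroneckerPoint 32 1) 0) := by
    rw [map_pairNumerator, map_zero, eval_X]
    exact verify_pairCertificate
  have nonneg := Certificate.nonneg_of_verify represents_pairNumerator represents_zero
    (by norm_num) verified (y := fun _ => 2 / 3 * (1 + u)) (fun _ => two_thirds_mul_mem_Icc hu)
    monotone_const le_rfl
  simp only [toInner_two_thirds_mul] at nonneg
  linarith

lemma cyclicSum_poleKernel_le_of_sorted {u v t : ℝ} (hu : -1 ≤ u) (huv : u ≤ v) (hvt : v ≤ t)
    (ht : t ≤ 1 / 2) (hdet : 0 ≤ gramDet u v t) :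
    cyclicSum poleKernel u v t ≤ 3 * tripleBound := by
  have verified : tripleCertificate.verify 16 (2 ^ 17)
      ((tripleNumerator (X 0) (X 1) (X 2)).eval (kroneckerPoint 16 3))
      ((gramNumerator (X 0) (X 1) (X 2)).eval (kroneckerPoint 16 3)) := by
    simp only [map_tripleNumerator, map_gramNumerator, eval_X]
    exact verify_tripleCertificate
  have monotone : Monotone ![u, v, t] := by
    simp [Fin.monotone_iff_le_succ, Fin.forall_fin_two, huv, hvt]
  have mem (i : Fin 3) : ![u, v, t] i ∈ Set.Icc (-1) (1 / 2) :=
    ⟨hu.trans (monotone (Fin.zero_le i)), (monotone (Fin.le_last i)).trans ht⟩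
  have nonneg := Certificate.nonneg_of_verify represents_tripleNumerator represents_gramNumerator
    (by norm_num) verified (y := fun i => 2 / 3 * (1 + ![u, v, t] i))
    (fun i => two_thirds_mul_mem_Icc (mem i)) (fun i j hij => by linarith [monotone hij])
    (by simpa [toInner_two_thirds_mul] using hdet)
  have nonneg' : 0 ≤ 4 ^ 6 * (3 * tripleBound - cyclicSum poleKernel u v t) / 2 ^ 17 := by
    simpa [toInner_two_thirds_mul] using nonneg
  linarith

lemma cyclicSum_poleKernel_le {u v t : ℝ} (hu : u ∈ Set.Icc (-1) (1 / 2))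
    (hv : v ∈ Set.Icc (-1) (1 / 2)) (ht : t ∈ Set.Icc (-1) (1 / 2)) (hdet : 0 ≤ gramDet u v t) :
    cyclicSum poleKernel u v t ≤ 3 * tripleBound :=
  cyclicSum_le_of_sorted poleKernel_comm
    (fun _ _ _ hu huv hvt ht hdet => cyclicSum_poleKernel_le_of_sorted hu huv hvt ht hdet)
    hu hv ht hdet

lemma three_point_bound_neg :
    sphereKernel 1 + 1357 * pairBound + 1357 * 1356 * tripleBound < 0 := by
  norm_num [sphereKernel, sphereForm, zonalKernel, sphereWeight, sphereCoeff,
    Finset.sum_range_succ, pairBound, tripleBound]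

end Bounds

lemma inner_le_half_of_one_le_dist {E : Type*} [NormedAddCommGroup E] [InnerProductSpace ℝ E]
    {x y : E} (hx : ‖x‖ = 1) (hy : ‖y‖ = 1) (hxy : 1 ≤ dist x y) : inner ℝ x y ≤ 1 / 2 := by
  have expand := norm_sub_sq_real x y
  rw [dist_eq_norm] at hxy
  rw [hx, hy] at expand
  nlinarith

end KissingNumber

open KissingNumber

theorem kissing_number_dim12_le_1357
    (S : Finset (EuclideanSpace ℝ (Fin 12)))
    (hnorm : ∀ x ∈ S, ‖x‖ = 1)
    (hdist : ∀ x ∈ S, ∀ y ∈ S, x ≠ y → 1 ≤ dist x y) :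
    S.card ≤ 1357 := by
  by_contra! large
  obtain ⟨S', subset, card_eq⟩ := Finset.exists_subset_card_eq (Nat.succ_le_of_lt large)
  have dim : Module.finrank ℝ (EuclideanSpace ℝ (Fin 12)) = 12 := finrank_euclideanSpace_fin
  have unit (x) (hx : x ∈ S') : ‖x‖ = 1 := hnorm x (subset hx)
  have separated (x) (hx : x ∈ S') (y) (hy : y ∈ S') (hxy : x ≠ y) : inner ℝ x y ≤ 1 / 2 :=
    inner_le_half_of_one_le_dist (unit x hx) (unit y hy) (hdist x (subset hx) y (subset hy) hxy)
  have bound := three_point_bound (sphereKernel_mem_positiveOnSphere dim)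
    (poleKernel_mem_positiveAtPole dim) (fun _ => sphereKernel_add_poleKernel_le)
    (fun _ hu _ hv _ ht => cyclicSum_poleKernel_le hu hv ht) unit separated
  rw [card_eq] at bound
  norm_num at bound
  linarith [three_point_bound_neg]
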